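/- arXiv:2501.01354 — 7 statements merged into one kernel-verified Lean document; each statement's English description precedes it below -/
import Mathlib

section
/- For every λ > λ_crit, θ(λ) is the unique t > 0 satisfying φ_1(λ t) = t; moreover φ_1(λ t) − t > 0 for all t ∈ (0, θ(λ)) and φ_1(λ t) − t < 0 for all t > θ(λ). -/
open MeasureTheory Filter Topology Set

/-!
Write `φ₁(t) = t G(t)`, where `G(t) = 𝔼[W² k(W t)]` and `k(x) = (1 - e⁻ˣ) / x`. By strict convexity
of the exponential, `k` decreases strictly from `k(0) = 1` to `0` at infinity. By dominated
convergence with the bound `W²`, the function `G` decreases strictly and continuously on `[0, ∞)`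
from `𝔼[W²]` to `0`. For `t > 0`, comparing `φ₁(λ t)` with `t` amounts to comparing `G(λ t)` with
`λ⁻¹`, and `G` takes the value `λ⁻¹` exactly once as soon as `λ⁻¹ < 𝔼[W²]`.
-/

theorem strictMono_dslope_of_strictConvexOn {f : ℝ → ℝ} {a : ℝ} (hf : StrictConvexOn ℝ univ f)
    (hfa : DifferentiableAt ℝ f a) : StrictMono (dslope f a) := by
  intro x y hxy
  rcases eq_or_ne x a with rfl | hxa
  · rw [dslope_same, dslope_of_ne f hxy.ne']
    exact hf.deriv_lt_slope (mem_univ x) (mem_univ y) hxy hfa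
  rcases eq_or_ne y a with rfl | hya
  · rw [dslope_same, dslope_of_ne f hxy.ne, slope_comm]
    exact hf.slope_lt_deriv (mem_univ x) (mem_univ y) hxy hfa
  · rw [dslope_of_ne f hxa, dslope_of_ne f hya, slope_def_field, slope_def_field]
    exact hf.secant_strict_mono (mem_univ a) (mem_univ x) (mem_univ y) hxa hya hxy

/-- The function `x ↦ (1 - e⁻ˣ) / x`, extended continuously to `x = 0`. It is encoded as a secant
slope of the exponential, so that it inherits its monotonicity from convexity. -/
noncomputable def expSecant (x : ℝ) : ℝ := dslope Real.exp 0 (-x)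

theorem expSecant_zero : expSecant 0 = 1 := by
  simp [expSecant]

theorem mul_expSecant (x : ℝ) : x * expSecant x = 1 - Real.exp (-x) := by
  have secant : -x * expSecant x = Real.exp (-x) - 1 := by
    simpa [expSecant] using sub_smul_dslope Real.exp 0 (-x)
  linarith

theorem continuous_expSecant : Continuous expSecant := by
  have continuous_dslope : Continuous (dslope Real.exp 0) :=
    continuousOn_univ.1 <| (continuousOn_dslope univ_mem).2
      ⟨Real.continuous_exp.continuousOn, Real.differentiableAt_exp⟩
  exact continuous_dslope.comp continuous_neg

theorem strictAnti_expSecant : StrictAnti expSecant := fun _ _ hxy ↦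
  strictMono_dslope_of_strictConvexOn strictConvexOn_exp Real.differentiableAt_exp
    (neg_lt_neg hxy)

theorem tendsto_expSecant_atTop : Tendsto expSecant atTop (𝓝 0) := by
  have quotient_tendsto : Tendsto (fun x : ℝ ↦ (1 - Real.exp (-x)) / x) atTop (𝓝 0) :=
    (tendsto_const_nhds.sub Real.tendsto_exp_neg_atTop_nhds_zero).div_atTop tendsto_id
  refine quotient_tendsto.congr' ?_
  filter_upwards [eventually_ne_atTop 0] with x hx
  rw [← mul_expSecant, mul_div_cancel_left₀ _ hx]

theorem expSecant_nonneg (x : ℝ) : 0 ≤ expSecant x :=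
  strictAnti_expSecant.antitone.le_of_tendsto tendsto_expSecant_atTop x

theorem expSecant_le_one {x : ℝ} (hx : 0 ≤ x) : expSecant x ≤ 1 :=
  expSecant_zero ▸ strictAnti_expSecant.antitone hx

section SecantMean

variable {Ω : Type*} [MeasurableSpace Ω] {μ : Measure Ω} {W : Ω → ℝ}

/-- The ratio `φ₁(t) / t`, where `φ₁(t) = 𝔼[W (1 - e^{-W t})]`, extended to `t = 0` by `𝔼[W²]`.
The factor `W²` is kept outside the secant because it dominates the integrand for all `t ≥ 0`. -/
noncomputable def secantMean (μ : Measure Ω) (W : Ω → ℝ) (t : ℝ) : ℝ :=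
  ∫ ω, W ω ^ 2 * expSecant (W ω * t) ∂μ

theorem integral_mul_one_sub_exp_eq_mul_secantMean (μ : Measure Ω) (W : Ω → ℝ) (t : ℝ) :
    ∫ ω, W ω * (1 - Real.exp (-(W ω) * t)) ∂μ = t * secantMean μ W t := by
  rw [secantMean, ← integral_const_mul]
  congr 1 with ω
  rw [neg_mul, ← mul_expSecant]
  ring

theorem secantMean_zero : secantMean μ W 0 = ∫ ω, W ω ^ 2 ∂μ := by
  simp only [secantMean, mul_zero, expSecant_zero, mul_one]

theorem aestronglyMeasurable_sq_mul_expSecant (hW : AEStronglyMeasurable W μ) (t : ℝ) :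
    AEStronglyMeasurable (fun ω ↦ W ω ^ 2 * expSecant (W ω * t)) μ :=
  (hW.pow 2).mul (continuous_expSecant.comp_aestronglyMeasurable (hW.mul_const t))

theorem norm_sq_mul_expSecant_le {w t : ℝ} (hw : 0 ≤ w) (ht : 0 ≤ t) :
    ‖w ^ 2 * expSecant (w * t)‖ ≤ w ^ 2 := by
  rw [Real.norm_of_nonneg (mul_nonneg (sq_nonneg w) (expSecant_nonneg _))]
  exact mul_le_of_le_one_right (sq_nonneg w) (expSecant_le_one (mul_nonneg hw ht))

theorem integrable_sq_mul_expSecant (hW : MemLp W 2 μ) (hW0 : 0 ≤ᵐ[μ] W) {t : ℝ} (ht : 0 ≤ t) :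
    Integrable (fun ω ↦ W ω ^ 2 * expSecant (W ω * t)) μ :=
  hW.integrable_sq.mono' (aestronglyMeasurable_sq_mul_expSecant hW.1 t)
    (hW0.mono fun _ hω ↦ norm_sq_mul_expSecant_le hω ht)

theorem continuousOn_secantMean (hW : MemLp W 2 μ) (hW0 : 0 ≤ᵐ[μ] W) :
    ContinuousOn (secantMean μ W) (Ici 0) := by
  refine continuousOn_of_dominated
    (fun t _ ↦ aestronglyMeasurable_sq_mul_expSecant hW.1 t)
    (fun t ht ↦ hW0.mono fun _ hω ↦ norm_sq_mul_expSecant_le hω ht) hW.integrable_sq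
    (ae_of_all _ fun ω ↦ Continuous.continuousOn ?_)
  exact continuous_const.mul (continuous_expSecant.comp (continuous_const_mul (W ω)))

theorem tendsto_secantMean_atTop (hW : MemLp W 2 μ) (hW0 : 0 ≤ᵐ[μ] W) :
    Tendsto (secantMean μ W) atTop (𝓝 0) := by
  have pointwise (w : ℝ) (hw : 0 ≤ w) :
      Tendsto (fun t ↦ w ^ 2 * expSecant (w * t)) atTop (𝓝 0) := by
    rcases hw.eq_or_lt with rfl | hw
    · simp
    · simpa only [mul_zero, Function.comp_def, id_eq] using
        (tendsto_expSecant_atTop.comp (tendsto_id.const_mul_atTop hw)).const_mul (w ^ 2)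
  rw [← integral_zero Ω ℝ (μ := μ)]
  refine tendsto_integral_filter_of_dominated_convergence (fun ω ↦ W ω ^ 2)
    (.of_forall (aestronglyMeasurable_sq_mul_expSecant hW.1)) ?_ hW.integrable_sq
    (hW0.mono fun ω hω ↦ pointwise (W ω) hω)
  filter_upwards [eventually_ge_atTop 0] with t ht
  exact hW0.mono fun _ hω ↦ norm_sq_mul_expSecant_le hω ht

theorem strictAntiOn_secantMean (hW : MemLp W 2 μ) (hW0 : 0 ≤ᵐ[μ] W) (hWne : ¬ W =ᵐ[μ] 0) :
    StrictAntiOn (secantMean μ W) (Ici 0) := by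
  intro s hs t ht hst
  have integrable_at {u : ℝ} (hu : u ∈ Ici 0) := integrable_sq_mul_expSecant hW hW0 hu
  have integrand_le : ∀ᵐ ω ∂μ, W ω ^ 2 * expSecant (W ω * t) ≤ W ω ^ 2 * expSecant (W ω * s) := by
    filter_upwards [hW0] with ω hω
    exact mul_le_mul_of_nonneg_left
      (strictAnti_expSecant.antitone (mul_le_mul_of_nonneg_left hst.le hω)) (sq_nonneg _)
  refine (integral_mono_ae (integrable_at ht) (integrable_at hs) integrand_le).lt_of_ne fun heq ↦
    hWne ?_
  filter_upwards [(integral_eq_iff_of_ae_le (integrable_at ht) (integrable_at hs) integrand_le).1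
    heq] with ω hω
  by_contra hne
  have arg_eq : W ω * t = W ω * s :=
    strictAnti_expSecant.injective (mul_left_cancel₀ (pow_ne_zero 2 hne) hω)
  exact hst.ne' (mul_left_cancel₀ hne arg_eq)

theorem exists_pos_secantMean_eq (hW : MemLp W 2 μ) (hW0 : 0 ≤ᵐ[μ] W) {c : ℝ} (hc : 0 < c)
    (hcW : c < ∫ ω, W ω ^ 2 ∂μ) : ∃ r, 0 < r ∧ secantMean μ W r = c := by
  obtain ⟨b, hb_lt, hb⟩ :=
    ((tendsto_secantMean_atTop hW hW0).eventually_lt_const hc |>.and (eventually_ge_atTop 0)).exists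
  obtain ⟨r, hr, hrc⟩ := intermediate_value_Ioo' hb
    ((continuousOn_secantMean hW hW0).mono Icc_subset_Ici_self)
    ⟨hb_lt, secantMean_zero (μ := μ) (W := W) ▸ hcW⟩
  exact ⟨r, hr.1, hrc⟩

theorem exists_pos_cmp_integral_mul_one_sub_exp_eq (hW : MemLp W 2 μ) (hW0 : 0 ≤ᵐ[μ] W)
    (hWne : ¬ W =ᵐ[μ] 0) {lam : ℝ} (hlam : (∫ ω, W ω ^ 2 ∂μ)⁻¹ < lam) :
    ∃ r, 0 < r ∧ ∀ t, 0 < t →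
      cmp (∫ ω, W ω * (1 - Real.exp (-(W ω) * (lam * t))) ∂μ) t = cmp r t := by
  have lam_pos : 0 < lam := (inv_nonneg.2 (integral_nonneg fun _ ↦ sq_nonneg _)).trans_lt hlam
  have sq_integral_pos : 0 < ∫ ω, W ω ^ 2 ∂μ := by
    refine (integral_nonneg fun _ ↦ sq_nonneg _).lt_of_ne' fun hzero ↦ hWne ?_
    filter_upwards [(integral_eq_zero_iff_of_nonneg (fun _ ↦ sq_nonneg _) hW.integrable_sq).1
      hzero] with ω hω using pow_eq_zero_iff two_ne_zero |>.1 hω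
  obtain ⟨s, hs, hsG⟩ := exists_pos_secantMean_eq hW hW0 (inv_pos.2 lam_pos)
    (inv_lt_of_inv_lt₀ sq_integral_pos hlam)
  refine ⟨s / lam, div_pos hs lam_pos, fun t ht ↦ ?_⟩
  have lam_t_pos : 0 < lam * t := mul_pos lam_pos ht
  calc cmp (∫ ω, W ω * (1 - Real.exp (-(W ω) * (lam * t))) ∂μ) t
      = cmp (lam * t * secantMean μ W (lam * t)) (lam * t * secantMean μ W s) := by
        rw [integral_mul_one_sub_exp_eq_mul_secantMean, hsG, mul_right_comm lam t lam⁻¹,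
          mul_inv_cancel₀ lam_pos.ne', one_mul]
    _ = cmp (secantMean μ W (lam * t)) (secantMean μ W s) := cmp_mul_pos_left lam_t_pos _ _
    _ = cmp s (lam * t) :=
        (strictAntiOn_secantMean hW hW0 hWne).cmp_map_eq lam_t_pos.le hs.le
    _ = cmp (s / lam) t := by
        rw [← cmp_mul_pos_left lam_pos (s / lam) t, mul_div_cancel₀ _ lam_pos.ne']

end SecantMean

theorem stmt_6_general
    {Ω : Type*} [MeasurableSpace Ω] (μ : Measure Ω) (W : Ω → ℝ)
    (hW : MemLp W 2 μ) (hW0 : 0 ≤ᵐ[μ] W) (hWne : ¬ W =ᵐ[μ] 0)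
    (φ1 : ℝ → ℝ) (hφ1 : ∀ t, φ1 t = ∫ ω, W ω * (1 - Real.exp (-(W ω) * t)) ∂μ)
    (θ : ℝ → ℝ) (hθ : ∀ lam, θ lam = sInf {t : ℝ | 0 < t ∧ φ1 (lam * t) - t < 0})
    (lam : ℝ) (hlam : (∫ ω, W ω ^ 2 ∂μ)⁻¹ < lam) :
    (0 < θ lam ∧ φ1 (lam * θ lam) = θ lam) ∧
    (∀ t : ℝ, 0 < t → φ1 (lam * t) = t → t = θ lam) ∧
    (∀ t : ℝ, 0 < t → t < θ lam → 0 < φ1 (lam * t) - t) ∧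
    (∀ t : ℝ, θ lam < t → φ1 (lam * t) - t < 0) := by
  obtain ⟨r, hr, cmp_eq⟩ := exists_pos_cmp_integral_mul_one_sub_exp_eq hW hW0 hWne hlam
  simp only [← hφ1] at cmp_eq
  have neg_iff {t : ℝ} (ht : 0 < t) : φ1 (lam * t) - t < 0 ↔ r < t :=
    sub_neg.trans (lt_iff_lt_of_cmp_eq_cmp (cmp_eq t ht))
  have eq_iff {t : ℝ} (ht : 0 < t) : φ1 (lam * t) = t ↔ r = t :=
    eq_iff_eq_of_cmp_eq_cmp (cmp_eq t ht)
  have pos_iff {t : ℝ} (ht : 0 < t) : 0 < φ1 (lam * t) - t ↔ t < r :=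
    sub_pos.trans (lt_iff_lt_of_cmp_eq_cmp (cmp_eq_cmp_symm.1 (cmp_eq t ht)))
  have negative_set : {t : ℝ | 0 < t ∧ φ1 (lam * t) - t < 0} = Ioi r :=
    Set.ext fun t ↦ ⟨fun ht ↦ (neg_iff ht.1).1 ht.2,
      fun ht ↦ ⟨hr.trans ht, (neg_iff (hr.trans ht)).2 ht⟩⟩
  have theta_eq : θ lam = r := by rw [hθ, negative_set, csInf_Ioi]
  rw [theta_eq]
  exact ⟨⟨hr, (eq_iff hr).2 rfl⟩, fun t ht h ↦ ((eq_iff ht).1 h).symm,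
    fun t ht ↦ (pos_iff ht).2, fun t ht ↦ (neg_iff (hr.trans ht)).2 ht⟩

/-- For `λ > λ_crit`, `θ(λ)` is the unique strictly positive root of `φ₁(λ t) = t`;
moreover `φ₁(λ t) - t > 0` on `(0, θ(λ))` and `φ₁(λ t) - t < 0` on `(θ(λ), ∞)`. -/
theorem stmt_6
    {Ω : Type*} [MeasurableSpace Ω] (P : Measure Ω) [IsProbabilityMeasure P]
    (W : Ω → ℝ) (hWmeas : Measurable W)
    (hWpos : ∀ᵐ ω ∂P, 0 < W ω)
    (hW2 : Integrable (fun ω => (W ω) ^ 2) P)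
    (lamCrit : ℝ) (hlamCrit : lamCrit = (∫ ω, (W ω) ^ 2 ∂P)⁻¹)
    (φ1 : ℝ → ℝ)
    (hφ1 : ∀ t, φ1 t = ∫ ω, W ω * (1 - Real.exp (-(W ω) * t)) ∂P)
    (θ : ℝ → ℝ)
    (hθ : ∀ lam, θ lam = sInf {t : ℝ | 0 < t ∧ φ1 (lam * t) - t < 0}) :
    ∀ lam : ℝ, lamCrit < lam →
      (0 < θ lam ∧ φ1 (lam * θ lam) = θ lam) ∧
      (∀ t : ℝ, 0 < t → φ1 (lam * t) = t → t = θ lam) ∧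
      (∀ t : ℝ, 0 < t → t < θ lam → 0 < φ1 (lam * t) - t) ∧
      (∀ t : ℝ, θ lam < t → φ1 (lam * t) - t < 0) := by
  subst hlamCrit
  exact stmt_6_general P W ((memLp_two_iff_integrable_sq hWmeas.aestronglyMeasurable).2 hW2)
    (hWpos.mono fun _ hω ↦ hω.le)
    (fun hzero ↦ (hWpos.and hzero).exists.elim fun _ hω ↦ hω.1.ne' hω.2) φ1 hφ1 θ hθ
end

section
/- For every λ > 0 the following are equivalent: (i) λ > λ_crit; (ii) θ(λ) > 0; (iii) ρ(λ) > 0. -/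
/-!
By dominated convergence `φ₁` has right derivative `𝔼[W²]` at `0`, and `1 - e⁻ˣ < x` gives
`φ₁(t) < t 𝔼[W²]` for `t > 0`. Hence `t ↦ φ₁(λt)` stays above the diagonal near `0` when
`λ 𝔼[W²] > 1`, so that `θ(λ) > 0`, and lies strictly below it on all of `(0, ∞)` when
`λ 𝔼[W²] ≤ 1`, so that `θ(λ) = 0`. Finally `φ₀` vanishes at `0` and is positive on `(0, ∞)`.
-/

open MeasureTheory Filter Topology Set

section PointwiseBounds

variable {w t : ℝ}

lemma one_sub_exp_neg_mul_le (w t : ℝ) : 1 - Real.exp (-w * t) ≤ w * t := by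
  linarith [Real.add_one_le_exp (-w * t)]

lemma one_sub_exp_neg_mul_nonneg (hw : 0 ≤ w) (ht : 0 ≤ t) : 0 ≤ 1 - Real.exp (-w * t) := by
  have : -w * t ≤ 0 := by linarith [mul_nonneg hw ht]
  linarith [Real.exp_le_one_iff.2 this]

lemma one_sub_exp_neg_mul_pos (hw : 0 < w) (ht : 0 < t) : 0 < 1 - Real.exp (-w * t) := by
  have : -w * t < 0 := by linarith [mul_pos hw ht]
  linarith [Real.exp_lt_one_iff.2 this]

lemma pow_mul_one_sub_exp_neg_mul_le (p : ℕ) (hw : 0 ≤ w) (t : ℝ) :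
    w ^ p * (1 - Real.exp (-w * t)) ≤ t * w ^ (p + 1) :=
  calc w ^ p * (1 - Real.exp (-w * t))
    _ ≤ w ^ p * (w * t) := by gcongr; exact one_sub_exp_neg_mul_le w t
    _ = t * w ^ (p + 1) := by ring

lemma pow_mul_one_sub_exp_neg_mul_lt (p : ℕ) (hw : 0 < w) (ht : t ≠ 0) :
    w ^ p * (1 - Real.exp (-w * t)) < t * w ^ (p + 1) := by
  have hexp : 1 - Real.exp (-w * t) < w * t := by
    linarith [Real.add_one_lt_exp (mul_ne_zero (neg_ne_zero.2 hw.ne') ht)]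
  calc w ^ p * (1 - Real.exp (-w * t))
    _ < w ^ p * (w * t) := by gcongr
    _ = t * w ^ (p + 1) := by ring

lemma tendsto_slope_pow_mul_one_sub_exp_neg_mul (p : ℕ) (w : ℝ) :
    Tendsto (fun t : ℝ => t⁻¹ * (w ^ p * (1 - Real.exp (-w * t)))) (𝓝[>] 0)
      (𝓝 (w ^ (p + 1))) := by
  have hderiv : HasDerivAt (fun t : ℝ => w ^ p * (1 - Real.exp (-w * t))) (w ^ (p + 1)) 0 := by
    refine ((((hasDerivAt_id (0 : ℝ)).const_mul (-w)).exp.const_sub 1).const_mul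
      (w ^ p)).congr_deriv ?_
    simp [pow_succ]
  simpa using hderiv.tendsto_slope_zero_right

end PointwiseBounds

lemma sInf_pos_of_eventually_notMem {S : Set ℝ} (hne : S.Nonempty) (hpos : S ⊆ Ioi 0)
    (hS : ∀ᶠ t in 𝓝[>] 0, t ∉ S) : 0 < sInf S := by
  obtain ⟨ε, hε, hsub⟩ := mem_nhdsGT_iff_exists_Ioo_subset.1 hS
  refine lt_of_lt_of_le hε (le_csInf hne fun t ht => ?_)
  by_contra! htε
  exact hsub ⟨hpos ht, htε⟩ ht

section NonnegativeWeight

variable {Ω : Type*} [MeasurableSpace Ω] {μ : Measure Ω} {W : Ω → ℝ}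

lemma integral_comp_pos {g : ℝ → ℝ} (hg0 : 0 ≤ g 0) (hg : ∀ w, 0 < w → 0 < g w)
    (hW0 : 0 ≤ᵐ[μ] W) (hW : ¬ W =ᵐ[μ] 0) (hint : Integrable (fun ω => g (W ω)) μ) :
    0 < ∫ ω, g (W ω) ∂μ := by
  have hgW : 0 ≤ᵐ[μ] fun ω => g (W ω) := by
    filter_upwards [hW0] with ω hω
    rcases hω.eq_or_lt with h | h
    · simpa [← h] using hg0
    · exact (hg _ h).le
  refine (integral_nonneg_of_ae hgW).lt_of_ne' fun hzero => hW ?_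
  filter_upwards [hW0, (integral_eq_zero_iff_of_nonneg_ae hgW hint).1 hzero] with ω hω hgω
  by_contra hne
  exact (hg _ (lt_of_le_of_ne hω (Ne.symm hne))).ne' hgω

/-- The function `φ_p(t) = 𝔼[W ^ p (1 - e ^ (-W t))]`, that is, the amount by which the
weighted Laplace transform `𝔼[W ^ p e ^ (-W t)]` falls below its value at `t = 0`. The expectation
is an integral against an arbitrary measure `μ`. -/
noncomputable def laplaceDefect (μ : Measure Ω) (W : Ω → ℝ) (p : ℕ) (t : ℝ) : ℝ :=
  ∫ ω, W ω ^ p * (1 - Real.exp (-(W ω) * t)) ∂μ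

section LaplaceDefect

variable {p : ℕ} {t : ℝ}

@[simp]
lemma laplaceDefect_zero : laplaceDefect μ W p 0 = 0 := by simp [laplaceDefect]

lemma integrable_pow_mul_one_sub_exp (hWm : AEStronglyMeasurable W μ) (hW0 : 0 ≤ᵐ[μ] W)
    (hint : Integrable (fun ω => W ω ^ (p + 1)) μ) (ht : 0 ≤ t) :
    Integrable (fun ω => W ω ^ p * (1 - Real.exp (-(W ω) * t))) μ := by
  refine (hint.const_mul t).mono' (by fun_prop) ?_
  filter_upwards [hW0] with ω hω
  rw [Real.norm_of_nonneg (mul_nonneg (pow_nonneg hω p) (one_sub_exp_neg_mul_nonneg hω ht))]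
  exact pow_mul_one_sub_exp_neg_mul_le p hω t

lemma laplaceDefect_pos (hWm : AEStronglyMeasurable W μ) (hW0 : 0 ≤ᵐ[μ] W) (hW : ¬ W =ᵐ[μ] 0)
    (hint : Integrable (fun ω => W ω ^ (p + 1)) μ) (ht : 0 < t) : 0 < laplaceDefect μ W p t :=
  integral_comp_pos (g := fun w => w ^ p * (1 - Real.exp (-w * t))) (by simp)
    (fun _ hw => mul_pos (pow_pos hw p) (one_sub_exp_neg_mul_pos hw ht)) hW0 hW
    (integrable_pow_mul_one_sub_exp hWm hW0 hint ht.le)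

lemma laplaceDefect_lt_mul_moment (hWm : AEStronglyMeasurable W μ) (hW0 : 0 ≤ᵐ[μ] W)
    (hW : ¬ W =ᵐ[μ] 0) (hint : Integrable (fun ω => W ω ^ (p + 1)) μ) (ht : 0 < t) :
    laplaceDefect μ W p t < t * ∫ ω, W ω ^ (p + 1) ∂μ := by
  have hdefect := integrable_pow_mul_one_sub_exp hWm hW0 hint ht.le
  have hgap := integral_comp_pos
    (g := fun w => t * w ^ (p + 1) - w ^ p * (1 - Real.exp (-w * t))) (by simp)
    (fun _ hw => sub_pos.2 (pow_mul_one_sub_exp_neg_mul_lt p hw ht.ne')) hW0 hW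
    ((hint.const_mul t).sub hdefect)
  rwa [integral_sub (hint.const_mul t) hdefect, integral_const_mul, sub_pos] at hgap

lemma laplaceDefect_le_moment (hW0 : 0 ≤ᵐ[μ] W) (hint : Integrable (fun ω => W ω ^ p) μ)
    (ht : 0 ≤ t) : laplaceDefect μ W p t ≤ ∫ ω, W ω ^ p ∂μ := by
  refine integral_mono_of_nonneg ?_ hint ?_
  · filter_upwards [hW0] with ω hω
    exact mul_nonneg (pow_nonneg hω p) (one_sub_exp_neg_mul_nonneg hω ht)
  · filter_upwards [hW0] with ω hω
    exact mul_le_of_le_one_right (pow_nonneg hω p) (by linarith [Real.exp_pos (-(W ω) * t)])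

lemma tendsto_slope_laplaceDefect (hWm : AEStronglyMeasurable W μ) (hW0 : 0 ≤ᵐ[μ] W)
    (hint : Integrable (fun ω => W ω ^ (p + 1)) μ) :
    Tendsto (fun t => t⁻¹ * laplaceDefect μ W p t) (𝓝[>] 0) (𝓝 (∫ ω, W ω ^ (p + 1) ∂μ)) := by
  simp only [laplaceDefect, ← integral_const_mul]
  refine tendsto_integral_filter_of_dominated_convergence (fun ω => W ω ^ (p + 1))
    (.of_forall fun t => by fun_prop) ?_ hint
    (.of_forall fun ω => tendsto_slope_pow_mul_one_sub_exp_neg_mul p (W ω))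
  filter_upwards [self_mem_nhdsWithin] with t (ht : 0 < t)
  filter_upwards [hW0] with ω hω
  have hnonneg : 0 ≤ W ω ^ p * (1 - Real.exp (-(W ω) * t)) :=
    mul_nonneg (pow_nonneg hω p) (one_sub_exp_neg_mul_nonneg hω ht.le)
  rw [Real.norm_of_nonneg (mul_nonneg (inv_nonneg.2 ht.le) hnonneg), inv_mul_le_iff₀ ht]
  exact pow_mul_one_sub_exp_neg_mul_le p hω t

end LaplaceDefect

/-- The parameter `θ(λ)`: the infimum of the `t > 0` at which `t ↦ φ₁(λ t)` lies strictly below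
the diagonal. -/
noncomputable def crossingPoint (μ : Measure Ω) (W : Ω → ℝ) (lam : ℝ) : ℝ :=
  sInf {t : ℝ | 0 < t ∧ laplaceDefect μ W 1 (lam * t) - t < 0}

/-- The parameter `ρ(λ) = φ₀(λ θ(λ))`, the probability that a mixed Poisson variable with random
intensity `λ θ(λ) W` is nonzero when `μ` is a probability measure. -/
noncomputable def survivalParameter (μ : Measure Ω) (W : Ω → ℝ) (lam : ℝ) : ℝ :=
  laplaceDefect μ W 0 (lam * crossingPoint μ W lam)

section PhaseTransition

variable {lam : ℝ}

lemma crossingPoint_nonneg : 0 ≤ crossingPoint μ W lam :=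
  Real.sInf_nonneg fun _ ht => ht.1.le

lemma exists_laplaceDefect_one_lt (hW0 : 0 ≤ᵐ[μ] W) (hW1 : Integrable W μ) (hlam : 0 ≤ lam) :
    ∃ t, 0 < t ∧ laplaceDefect μ W 1 (lam * t) < t := by
  have hmean : 0 ≤ ∫ ω, W ω ∂μ := integral_nonneg_of_ae hW0
  refine ⟨(∫ ω, W ω ∂μ) + 1, by linarith, ?_⟩
  have hbound := laplaceDefect_le_moment (p := 1) (t := lam * ((∫ ω, W ω ∂μ) + 1)) hW0
    (by simpa using hW1) (by positivity)
  simp only [pow_one] at hbound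
  linarith

lemma crossingPoint_pos (hW0 : 0 ≤ᵐ[μ] W) (hW1 : Integrable W μ)
    (hW2 : Integrable (fun ω => W ω ^ 2) μ) (hlam : 0 < lam)
    (hsuper : 1 < lam * ∫ ω, W ω ^ 2 ∂μ) : 0 < crossingPoint μ W lam := by
  have hslope : ∀ᶠ s in 𝓝[>] 0, lam⁻¹ < s⁻¹ * laplaceDefect μ W 1 s :=
    (tendsto_slope_laplaceDefect hW1.aestronglyMeasurable hW0 hW2).eventually_const_lt
      ((inv_lt_iff_one_lt_mul₀' hlam).2 hsuper)
  have hscale : Tendsto (fun t => lam * t) (𝓝[>] 0) (𝓝[>] 0) := by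
    refine tendsto_nhdsWithin_iff.2 ⟨?_, ?_⟩
    · exact ((continuous_const_mul lam).tendsto' 0 0 (mul_zero lam)).mono_left nhdsWithin_le_nhds
    · filter_upwards [self_mem_nhdsWithin] with t ht using mul_pos hlam ht
  obtain ⟨t₀, ht₀, hlt₀⟩ := exists_laplaceDefect_one_lt hW0 hW1 hlam.le
  refine sInf_pos_of_eventually_notMem ⟨t₀, ht₀, sub_neg.2 hlt₀⟩ (fun _ ht => ht.1) ?_
  filter_upwards [hscale.eventually hslope, self_mem_nhdsWithin] with t hlt (ht : 0 < t)
  have habove : t < laplaceDefect μ W 1 (lam * t) :=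
    calc t
      _ = lam * t * lam⁻¹ := by field_simp
      _ < laplaceDefect μ W 1 (lam * t) := (lt_inv_mul_iff₀ (mul_pos hlam ht)).1 hlt
  exact fun hmem => (sub_neg.1 hmem.2).not_gt habove

lemma crossingPoint_eq_zero (hWm : AEStronglyMeasurable W μ) (hW0 : 0 ≤ᵐ[μ] W)
    (hW : ¬ W =ᵐ[μ] 0) (hW2 : Integrable (fun ω => W ω ^ 2) μ) (hlam : 0 < lam)
    (hsub : lam * ∫ ω, W ω ^ 2 ∂μ ≤ 1) : crossingPoint μ W lam = 0 := by
  have hbelow : ∀ t, 0 < t → laplaceDefect μ W 1 (lam * t) < t := fun t ht =>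
    calc laplaceDefect μ W 1 (lam * t)
      _ < lam * t * ∫ ω, W ω ^ 2 ∂μ :=
        laplaceDefect_lt_mul_moment hWm hW0 hW hW2 (mul_pos hlam ht)
      _ = (lam * ∫ ω, W ω ^ 2 ∂μ) * t := by ring
      _ ≤ t := mul_le_of_le_one_left ht.le hsub
  have hset : {t : ℝ | 0 < t ∧ laplaceDefect μ W 1 (lam * t) - t < 0} = Ioi 0 :=
    Subset.antisymm (fun _ ht => ht.1) fun t ht => ⟨ht, sub_neg.2 (hbelow t ht)⟩
  rw [crossingPoint, hset, csInf_Ioi]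

lemma crossingPoint_pos_iff (hW0 : 0 ≤ᵐ[μ] W) (hW : ¬ W =ᵐ[μ] 0) (hW1 : Integrable W μ)
    (hW2 : Integrable (fun ω => W ω ^ 2) μ) (hlam : 0 < lam) :
    0 < crossingPoint μ W lam ↔ 1 < lam * ∫ ω, W ω ^ 2 ∂μ := by
  refine ⟨fun hpos => ?_, crossingPoint_pos hW0 hW1 hW2 hlam⟩
  by_contra! hsub
  exact hpos.ne' (crossingPoint_eq_zero hW1.aestronglyMeasurable hW0 hW hW2 hlam hsub)

lemma survivalParameter_pos_iff (hW0 : 0 ≤ᵐ[μ] W) (hW : ¬ W =ᵐ[μ] 0) (hW1 : Integrable W μ)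
    (hlam : 0 < lam) : 0 < survivalParameter μ W lam ↔ 0 < crossingPoint μ W lam := by
  refine ⟨fun hpos => crossingPoint_nonneg.lt_of_ne' fun hzero => ?_, fun hpos => ?_⟩
  · simp [survivalParameter, hzero] at hpos
  · exact laplaceDefect_pos hW1.aestronglyMeasurable hW0 hW (by simpa using hW1)
      (mul_pos hlam hpos)

end PhaseTransition

end NonnegativeWeight

theorem stmt_7_general {Ω : Type*} [MeasurableSpace Ω] {μ : Measure Ω} {W : Ω → ℝ}
    (hW0 : 0 ≤ᵐ[μ] W) (hW : ¬ W =ᵐ[μ] 0) (hW1 : Integrable W μ)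
    (hW2 : Integrable (fun ω => W ω ^ 2) μ) {lam : ℝ} (hlam : 0 < lam) :
    ((∫ ω, W ω ^ 2 ∂μ)⁻¹ < lam ↔ 0 < crossingPoint μ W lam) ∧
      ((∫ ω, W ω ^ 2 ∂μ)⁻¹ < lam ↔ 0 < survivalParameter μ W lam) := by
  have hmoment : 0 < ∫ ω, W ω ^ 2 ∂μ :=
    integral_comp_pos (g := fun w => w ^ 2) (by simp) (fun _ hw => pow_pos hw 2) hW0 hW hW2
  rw [survivalParameter_pos_iff hW0 hW hW1 hlam, and_self,
    crossingPoint_pos_iff hW0 hW hW1 hW2 hlam, inv_lt_iff_one_lt_mul₀ hmoment]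

/-- For every `λ > 0` the following are equivalent: `λ > λ_crit`, `θ(λ) > 0`, and
`ρ(λ) > 0`. -/
theorem stmt_7
    {Ω : Type*} [MeasurableSpace Ω] (P : Measure Ω) [IsProbabilityMeasure P]
    (W : Ω → ℝ) (hWmeas : Measurable W)
    (hWpos : ∀ᵐ ω ∂P, 0 < W ω)
    (hW2 : Integrable (fun ω => (W ω) ^ 2) P)
    (lamCrit : ℝ) (hlamCrit : lamCrit = (∫ ω, (W ω) ^ 2 ∂P)⁻¹)
    (φ1 : ℝ → ℝ)
    (hφ1 : ∀ t, φ1 t = ∫ ω, W ω * (1 - Real.exp (-(W ω) * t)) ∂P)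
    (θ : ℝ → ℝ)
    (hθ : ∀ lam, θ lam = sInf {t : ℝ | 0 < t ∧ φ1 (lam * t) - t < 0})
    (φ0 : ℝ → ℝ)
    (hφ0 : ∀ t, φ0 t = ∫ ω, (1 - Real.exp (-(W ω) * t)) ∂P)
    (ρ : ℝ → ℝ) (hρ : ∀ lam, ρ lam = φ0 (lam * θ lam)) :
    ∀ lam : ℝ, 0 < lam →
      ((lamCrit < lam ↔ 0 < θ lam) ∧ (lamCrit < lam ↔ 0 < ρ lam)) := by
  have hW1 : Integrable W P :=
    ((memLp_two_iff_integrable_sq hWmeas.aestronglyMeasurable).2 hW2).integrable one_le_two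
  have hW : ¬ W =ᵐ[P] 0 := fun hzero =>
    (hWpos.and hzero).exists.elim fun _ h => h.1.ne' h.2
  simpa only [survivalParameter, crossingPoint, laplaceDefect, pow_zero, one_mul, pow_one,
    hlamCrit, hρ, hθ, hφ0, hφ1] using
    fun lam => stmt_7_general (lam := lam) (hWpos.mono fun _ => le_of_lt) hW hW1 hW2
end

section
/- For every λ > 0 one has θ(λ) < 𝔼[W] and ρ(λ) < 1. -/
open MeasureTheory Filter Topology Set

/-!
Both inequalities are instances of `𝔼[f (1 - e^{-W t})] < 𝔼[f]`, valid for every nonnegative weight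
`f` that does not vanish almost everywhere. With `f = 1` this is `ρ(λ) < 1`. With `f = W` and
`m = 𝔼[W]` it says that the monotone map `t ↦ φ_1(λ t)` sends `m` strictly below itself; by
monotonicity it then sends every `t < m` close enough to `m` strictly below itself, so the infimum
`θ(λ)` lies strictly below `m`.
-/

theorem sInf_setOf_map_lt_lt_of_monotoneOn {α : Type*} [ConditionallyCompleteLinearOrder α]
    [DenselyOrdered α] {g : α → α} {a m : α} (hg : MonotoneOn g (Ioi a)) (ham : a < m)
    (hgm : g m < m) : sInf {t | a < t ∧ g t < t} < m := by
  obtain ⟨t, hmax, htm⟩ := exists_between (max_lt ham hgm)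
  obtain ⟨hat, hgmt⟩ := max_lt_iff.1 hmax
  have hgt : g t < t := (hg hat ham htm.le).trans_lt hgmt
  exact csInf_lt_of_lt ⟨a, fun s hs => hs.1.le⟩ ⟨hat, hgt⟩ htm

section WeightedExponential

variable {Ω : Type*} [MeasurableSpace Ω] {μ : Measure Ω} {f W : Ω → ℝ} {t : ℝ}

theorem integrable_mul_one_sub_exp_neg_mul (hf : Integrable f μ) (hW : AEMeasurable W μ)
    (hW0 : 0 ≤ᵐ[μ] W) (ht : 0 ≤ t) :
    Integrable (fun ω => f ω * (1 - Real.exp (-(W ω) * t))) μ := by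
  refine hf.mul_bdd (c := 1) (by fun_prop) ?_
  filter_upwards [hW0] with ω hω
  have hexp : Real.exp (-(W ω) * t) ≤ 1 :=
    Real.exp_le_one_iff.2 (mul_nonpos_of_nonpos_of_nonneg (neg_nonpos.2 hω) ht)
  rw [Real.norm_of_nonneg (sub_nonneg.2 hexp)]
  exact sub_le_self 1 (Real.exp_nonneg _)

theorem monotoneOn_integral_mul_one_sub_exp_neg_mul (hf : Integrable f μ) (hf0 : 0 ≤ᵐ[μ] f)
    (hW : AEMeasurable W μ) (hW0 : 0 ≤ᵐ[μ] W) :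
    MonotoneOn (fun t => ∫ ω, f ω * (1 - Real.exp (-(W ω) * t)) ∂μ) (Ici 0) := by
  intro s hs t ht hst
  refine integral_mono_ae (integrable_mul_one_sub_exp_neg_mul hf hW hW0 hs)
    (integrable_mul_one_sub_exp_neg_mul hf hW hW0 ht) ?_
  filter_upwards [hf0, hW0] with ω hfω hWω
  have hexp : Real.exp (-(W ω) * t) ≤ Real.exp (-(W ω) * s) :=
    Real.exp_le_exp.2 (mul_le_mul_of_nonpos_left hst (neg_nonpos.2 hWω))
  exact mul_le_mul_of_nonneg_left (sub_le_sub_left hexp 1) hfω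

theorem integral_mul_one_sub_exp_neg_mul_lt (hf : Integrable f μ) (hf0 : 0 ≤ᵐ[μ] f)
    (hf_ne : ¬ f =ᵐ[μ] 0) (hW : AEMeasurable W μ) (hW0 : 0 ≤ᵐ[μ] W) (ht : 0 ≤ t) :
    ∫ ω, f ω * (1 - Real.exp (-(W ω) * t)) ∂μ < ∫ ω, f ω ∂μ := by
  have hint := integrable_mul_one_sub_exp_neg_mul hf hW hW0 ht
  have hle : (fun ω => f ω * (1 - Real.exp (-(W ω) * t))) ≤ᵐ[μ] f := by
    filter_upwards [hf0] with ω hω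
    exact mul_le_of_le_one_right hω (sub_le_self 1 (Real.exp_nonneg _))
  refine (integral_mono_ae hint hf hle).lt_of_ne fun heq => hf_ne ?_
  filter_upwards [(integral_eq_iff_of_ae_le hint hf hle).1 heq] with ω hω
  have hmul : f ω * Real.exp (-(W ω) * t) = 0 := by linarith
  exact (mul_eq_zero.1 hmul).resolve_right (Real.exp_ne_zero _)

end WeightedExponential

theorem stmt_8_general
    {Ω : Type*} [MeasurableSpace Ω] (P : Measure Ω) [IsProbabilityMeasure P]
    (W : Ω → ℝ) (hW : Integrable W P) (hW0 : 0 ≤ᵐ[P] W) (hW_ne : ¬ W =ᵐ[P] 0)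
    (φ1 : ℝ → ℝ)
    (hφ1 : ∀ t, φ1 t = ∫ ω, W ω * (1 - Real.exp (-(W ω) * t)) ∂P)
    (θ : ℝ → ℝ)
    (hθ : ∀ lam, θ lam = sInf {t : ℝ | 0 < t ∧ φ1 (lam * t) - t < 0})
    (φ0 : ℝ → ℝ)
    (hφ0 : ∀ t, φ0 t = ∫ ω, (1 - Real.exp (-(W ω) * t)) ∂P)
    (ρ : ℝ → ℝ) (hρ : ∀ lam, ρ lam = φ0 (lam * θ lam)) :
    ∀ lam : ℝ, 0 ≤ lam → θ lam < (∫ ω, W ω ∂P) ∧ ρ lam < 1 := by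
  intro lam hlam
  have hmean : 0 < ∫ ω, W ω ∂P := (integral_nonneg_of_ae hW0).lt_of_ne'
    (mt (integral_eq_zero_iff_of_nonneg_ae hW0 hW).1 hW_ne)
  constructor
  · have hmono : MonotoneOn (fun t => φ1 (lam * t)) (Ioi 0) := fun s hs t ht hst => by
      simpa only [hφ1] using monotoneOn_integral_mul_one_sub_exp_neg_mul hW hW0 hW.aemeasurable hW0
        (mul_nonneg hlam hs.le) (mul_nonneg hlam ht.le) (mul_le_mul_of_nonneg_left hst hlam)
    have hφ1_mean : φ1 (lam * ∫ ω, W ω ∂P) < ∫ ω, W ω ∂P := by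
      rw [hφ1]
      exact integral_mul_one_sub_exp_neg_mul_lt hW hW0 hW_ne hW.aemeasurable hW0
        (mul_nonneg hlam hmean.le)
    simpa only [hθ, sub_neg] using sInf_setOf_map_lt_lt_of_monotoneOn hmono hmean hφ1_mean
  · have hθ_nonneg : 0 ≤ θ lam := hθ lam ▸ Real.sInf_nonneg fun t ht => ht.1.le
    have hone_ne : ¬ (fun _ => 1 : Ω → ℝ) =ᵐ[P] 0 := by
      simp [EventuallyEq, IsProbabilityMeasure.ne_zero P]
    simpa [hρ, hφ0] using integral_mul_one_sub_exp_neg_mul_lt (integrable_const (1 : ℝ))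
      (ae_of_all P fun _ => zero_le_one) hone_ne hW.aemeasurable hW0 (mul_nonneg hlam hθ_nonneg)

/-- For every `λ > 0`, `θ(λ) < E[W]` and `ρ(λ) < 1`. -/
theorem stmt_8
    {Ω : Type*} [MeasurableSpace Ω] (P : Measure Ω) [IsProbabilityMeasure P]
    (W : Ω → ℝ) (hWmeas : Measurable W)
    (hWpos : ∀ᵐ ω ∂P, 0 < W ω)
    (hW2 : Integrable (fun ω => (W ω) ^ 2) P)
    (φ1 : ℝ → ℝ)
    (hφ1 : ∀ t, φ1 t = ∫ ω, W ω * (1 - Real.exp (-(W ω) * t)) ∂P)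
    (θ : ℝ → ℝ)
    (hθ : ∀ lam, θ lam = sInf {t : ℝ | 0 < t ∧ φ1 (lam * t) - t < 0})
    (φ0 : ℝ → ℝ)
    (hφ0 : ∀ t, φ0 t = ∫ ω, (1 - Real.exp (-(W ω) * t)) ∂P)
    (ρ : ℝ → ℝ) (hρ : ∀ lam, ρ lam = φ0 (lam * θ lam)) :
    ∀ lam : ℝ, 0 < lam → θ lam < (∫ ω, W ω ∂P) ∧ ρ lam < 1 := by
  have hW : Integrable W P :=
    ((memLp_two_iff_integrable_sq hWmeas.aestronglyMeasurable).2 hW2).integrable one_le_two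
  have hW_ne : ¬ W =ᵐ[P] 0 := fun hW_zero =>
    (hWpos.and hW_zero).exists.elim fun _ hω => hω.1.ne' hω.2
  exact fun lam hlam => stmt_8_general P W hW (hWpos.mono fun _ => le_of_lt) hW_ne φ1 hφ1 θ hθ
    φ0 hφ0 ρ hρ lam hlam.le
end

section
/- For every λ > λ_crit one has β(λ) > 0, i.e. 1 − λ 𝔼[W² e^{−W λ θ(λ)}] > 0. -/
open MeasureTheory Filter Topology Set

/-! The slope `φ₁ t / t` tends to `E[W²]` at `0` and to `0` at infinity, so for `λ E[W²] > 1` the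
function `t ↦ φ₁ (λ t)` starts above the diagonal and ends below it; hence `θ > 0` and, by
continuity, `φ₁ (λ θ) ≤ θ`. The integrand of `φ₁` is concave in `t` and vanishes at `0`, so it
exceeds `t` times its derivative: `θ λ E[W² exp (-W λ θ)] < φ₁ (λ θ) ≤ θ`. -/

section DiagonalCrossing

/-- The infimum of the positive times at which `f` lies strictly below the diagonal; for
`f t = φ₁ (λ t)` this is the paper's `θ(λ)`. It takes the junk value `0` if there is no such
time. -/
noncomputable def diagonalCrossing (f : ℝ → ℝ) : ℝ :=
  sInf {t | 0 < t ∧ f t < t}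

variable {f : ℝ → ℝ}

lemma diagonalCrossing_pos (habove : ∀ᶠ t in 𝓝[>] 0, t ≤ f t) (hbelow : ∃ t, 0 < t ∧ f t < t) :
    0 < diagonalCrossing f := by
  obtain ⟨ε, hε, hεf⟩ := mem_nhdsGT_iff_exists_Ioo_subset.1 habove
  refine lt_of_lt_of_le hε (le_csInf hbelow fun t ⟨ht, hft⟩ => ?_)
  by_contra! htε
  exact hft.not_ge (hεf ⟨ht, htε⟩)

lemma apply_diagonalCrossing_le (hf : ContinuousAt f (diagonalCrossing f))
    (hbelow : ∃ t, 0 < t ∧ f t < t) : f (diagonalCrossing f) ≤ diagonalCrossing f :=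
  hf.continuousWithinAt.closure_le (csInf_mem_closure hbelow ⟨0, fun _ ht => ht.1.le⟩)
    continuousWithinAt_id fun _ ht => ht.2.le

end DiagonalCrossing

section Pointwise

variable {w t : ℝ}

lemma mul_exp_neg_lt_one_sub_exp_neg {x : ℝ} (hx : x ≠ 0) :
    x * Real.exp (-x) < 1 - Real.exp (-x) := by
  have h : (x + 1) * Real.exp (-x) < Real.exp x * Real.exp (-x) :=
    mul_lt_mul_of_pos_right (Real.add_one_lt_exp hx) (Real.exp_pos _)
  rw [← Real.exp_add, add_neg_cancel, Real.exp_zero] at h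
  linarith

lemma mul_one_sub_exp_neg_mul_nonneg (hw : 0 ≤ w) (ht : 0 ≤ t) :
    0 ≤ w * (1 - Real.exp (-w * t)) := by
  have : Real.exp (-w * t) ≤ 1 := Real.exp_le_one_iff.2 (by nlinarith)
  exact mul_nonneg hw (sub_nonneg.2 this)

lemma mul_one_sub_exp_neg_mul_le (hw : 0 ≤ w) (t : ℝ) :
    w * (1 - Real.exp (-w * t)) ≤ t * w ^ 2 :=
  calc w * (1 - Real.exp (-w * t)) ≤ w * (w * t) := by
        gcongr
        linarith [neg_mul w t ▸ Real.one_sub_le_exp_neg (w * t)]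
    _ = t * w ^ 2 := by ring

lemma mul_sq_mul_exp_neg_mul_lt (hw : 0 < w) (ht : t ≠ 0) :
    t * (w ^ 2 * Real.exp (-w * t)) < w * (1 - Real.exp (-w * t)) :=
  calc t * (w ^ 2 * Real.exp (-w * t)) = w * (w * t * Real.exp (-(w * t))) := by
        rw [neg_mul]; ring
    _ < w * (1 - Real.exp (-(w * t))) := by
        gcongr
        exact mul_exp_neg_lt_one_sub_exp_neg (mul_ne_zero hw.ne' ht)
    _ = w * (1 - Real.exp (-w * t)) := by rw [neg_mul]

lemma tendsto_mul_one_sub_exp_neg_mul_div_nhdsGT_zero (w : ℝ) :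
    Tendsto (fun t => w * (1 - Real.exp (-w * t)) / t) (𝓝[>] 0) (𝓝 (w ^ 2)) := by
  have hderiv : HasDerivAt (fun t => w * (1 - Real.exp (-w * t))) (w ^ 2) 0 :=
    ((((hasDerivAt_id' (0 : ℝ)).const_mul (-w)).exp.const_sub 1).const_mul w).congr_deriv
      (by simp [sq])
  simpa [div_eq_inv_mul] using hderiv.tendsto_slope_zero_right

lemma tendsto_mul_one_sub_exp_neg_mul_div_atTop (hw : 0 ≤ w) :
    Tendsto (fun t => w * (1 - Real.exp (-w * t)) / t) atTop (𝓝 0) := by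
  refine tendsto_bdd_div_atTop_nhds_zero (b := 0) (B := w) ?_ ?_ tendsto_id
  · filter_upwards [eventually_ge_atTop 0] with t ht
    exact mul_one_sub_exp_neg_mul_nonneg hw ht
  · exact Eventually.of_forall fun t =>
      mul_le_of_le_one_right hw (sub_le_self _ (Real.exp_pos _).le)

end Pointwise

lemma integral_pos_of_ae_pos {Ω : Type*} [MeasurableSpace Ω] {μ : Measure Ω} [NeZero μ]
    {f : Ω → ℝ} (hf : Integrable f μ) (hpos : ∀ᵐ ω ∂μ, 0 < f ω) : 0 < ∫ ω, f ω ∂μ := by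
  have hnonneg : 0 ≤ᵐ[μ] f := hpos.mono fun _ => le_of_lt
  refine (integral_nonneg_of_ae hnonneg).lt_of_ne' fun h => ?_
  have hzero : f =ᵐ[μ] 0 := (integral_eq_zero_iff_of_nonneg_ae hnonneg hf).1 h
  obtain ⟨ω, hω, hω0⟩ := (hpos.and hzero).exists
  exact hω.ne' hω0

section PhiOne

variable {Ω : Type*} [MeasurableSpace Ω] {μ : Measure Ω} {W : Ω → ℝ} {t lam : ℝ}

/-- The function `φ₁(t) = E[W (1 - exp (-W t))]` of the paper, with an arbitrary measure `μ` in
place of the probability. -/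
noncomputable def phiOne (μ : Measure Ω) (W : Ω → ℝ) (t : ℝ) : ℝ :=
  ∫ ω, W ω * (1 - Real.exp (-(W ω) * t)) ∂μ

lemma aemeasurable_of_sq (hW : 0 ≤ᵐ[μ] W) (hW2 : AEMeasurable (fun ω => W ω ^ 2) μ) :
    AEMeasurable W μ :=
  hW2.sqrt.congr (hW.mono fun _ h => Real.sqrt_sq h)

lemma norm_phiOne_integrand_le (hW : 0 ≤ᵐ[μ] W) (ht : 0 ≤ t) :
    ∀ᵐ ω ∂μ, ‖W ω * (1 - Real.exp (-(W ω) * t))‖ ≤ t * W ω ^ 2 := by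
  filter_upwards [hW] with ω hω
  rw [Real.norm_of_nonneg (mul_one_sub_exp_neg_mul_nonneg hω ht)]
  exact mul_one_sub_exp_neg_mul_le hω t

lemma aestronglyMeasurable_phiOne_integrand (hW : AEMeasurable W μ) (t : ℝ) :
    AEStronglyMeasurable (fun ω => W ω * (1 - Real.exp (-(W ω) * t))) μ :=
  AEMeasurable.aestronglyMeasurable (by fun_prop)

lemma integrable_phiOne_integrand (hW : 0 ≤ᵐ[μ] W) (hW2 : Integrable (fun ω => W ω ^ 2) μ)
    (ht : 0 ≤ t) : Integrable (fun ω => W ω * (1 - Real.exp (-(W ω) * t))) μ :=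
  (hW2.const_mul t).mono'
    (aestronglyMeasurable_phiOne_integrand (aemeasurable_of_sq hW hW2.aemeasurable) t)
    (norm_phiOne_integrand_le hW ht)

lemma integrable_sq_mul_exp_neg_mul (hW : 0 ≤ᵐ[μ] W) (hW2 : Integrable (fun ω => W ω ^ 2) μ)
    (ht : 0 ≤ t) : Integrable (fun ω => W ω ^ 2 * Real.exp (-(W ω) * t)) μ := by
  have hWm : AEMeasurable W μ := aemeasurable_of_sq hW hW2.aemeasurable
  refine hW2.mul_bdd (c := 1) (AEMeasurable.aestronglyMeasurable (by fun_prop)) ?_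
  filter_upwards [hW] with ω hω
  rw [Real.norm_of_nonneg (Real.exp_pos _).le, Real.exp_le_one_iff, neg_mul, neg_nonpos]
  exact mul_nonneg hω ht

lemma continuousAt_phiOne (hW : 0 ≤ᵐ[μ] W) (hW2 : Integrable (fun ω => W ω ^ 2) μ)
    (ht : 0 < t) : ContinuousAt (phiOne μ W) t := by
  have hWm : AEMeasurable W μ := aemeasurable_of_sq hW hW2.aemeasurable
  refine continuousAt_of_dominated (bound := fun ω => (t + 1) * W ω ^ 2)
    (Eventually.of_forall (aestronglyMeasurable_phiOne_integrand hWm)) ?_ (hW2.const_mul _)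
    (Eventually.of_forall fun ω => by fun_prop)
  filter_upwards [Ioo_mem_nhds ht (lt_add_one t)] with s ⟨hs0, hst⟩
  filter_upwards [norm_phiOne_integrand_le hW hs0.le] with ω hω
  exact hω.trans (by gcongr)

lemma tendsto_phiOne_div {l : Filter ℝ} [l.IsCountablyGenerated] {g : ℝ → ℝ}
    (hW : 0 ≤ᵐ[μ] W) (hW2 : Integrable (fun ω => W ω ^ 2) μ) (hl : ∀ᶠ t in l, 0 < t)
    (hg : ∀ w, 0 ≤ w → Tendsto (fun t => w * (1 - Real.exp (-w * t)) / t) l (𝓝 (g w))) :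
    Tendsto (fun t => phiOne μ W t / t) l (𝓝 (∫ ω, g (W ω) ∂μ)) := by
  have hWm : AEMeasurable W μ := aemeasurable_of_sq hW hW2.aemeasurable
  simp only [phiOne, ← integral_div]
  refine tendsto_integral_filter_of_dominated_convergence (fun ω => W ω ^ 2)
    (Eventually.of_forall fun t => AEMeasurable.aestronglyMeasurable (by fun_prop)) ?_ hW2
    (hW.mono fun ω hω => hg _ hω)
  filter_upwards [hl] with t ht
  filter_upwards [norm_phiOne_integrand_le hW ht.le] with ω hω
  rwa [norm_div, Real.norm_of_nonneg ht.le, div_le_iff₀' ht]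

lemma tendsto_phiOne_div_nhdsGT_zero (hW : 0 ≤ᵐ[μ] W)
    (hW2 : Integrable (fun ω => W ω ^ 2) μ) :
    Tendsto (fun t => phiOne μ W t / t) (𝓝[>] 0) (𝓝 (∫ ω, W ω ^ 2 ∂μ)) :=
  tendsto_phiOne_div hW hW2 self_mem_nhdsWithin
    fun w _ => tendsto_mul_one_sub_exp_neg_mul_div_nhdsGT_zero w

lemma tendsto_phiOne_div_atTop (hW : 0 ≤ᵐ[μ] W) (hW2 : Integrable (fun ω => W ω ^ 2) μ) :
    Tendsto (fun t => phiOne μ W t / t) atTop (𝓝 0) := by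
  simpa using tendsto_phiOne_div (g := fun _ => 0) hW hW2 (eventually_gt_atTop 0)
    fun _ => tendsto_mul_one_sub_exp_neg_mul_div_atTop

lemma mul_integral_sq_mul_exp_neg_mul_lt_phiOne (hW : 0 ≤ᵐ[μ] W) (hW0 : ¬ W =ᵐ[μ] 0)
    (hW2 : Integrable (fun ω => W ω ^ 2) μ) (ht : 0 < t) :
    t * ∫ ω, W ω ^ 2 * Real.exp (-(W ω) * t) ∂μ < phiOne μ W t := by
  have hf := (integrable_sq_mul_exp_neg_mul hW hW2 ht.le).const_mul t
  have hg := integrable_phiOne_integrand hW hW2 ht.le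
  have hlt : ∀ᵐ ω ∂μ, W ω ≠ 0 →
      t * (W ω ^ 2 * Real.exp (-(W ω) * t)) < W ω * (1 - Real.exp (-(W ω) * t)) :=
    hW.mono fun ω hω hne => mul_sq_mul_exp_neg_mul_lt (hω.lt_of_ne' hne) ht.ne'
  have hle : (fun ω => t * (W ω ^ 2 * Real.exp (-(W ω) * t)))
      ≤ᵐ[μ] fun ω => W ω * (1 - Real.exp (-(W ω) * t)) := by
    filter_upwards [hlt] with ω hω
    by_cases h0 : W ω = 0
    · simp [h0]
    · exact (hω h0).le
  rw [← integral_const_mul]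
  refine (integral_mono_ae hf hg hle).lt_of_ne fun heq => hW0 ?_
  filter_upwards [hlt, (integral_eq_iff_of_ae_le hf hg hle).1 heq] with ω hω heqω
  by_contra h0
  exact (hω h0).ne heqω

lemma eventually_le_phiOne_mul (hW : 0 ≤ᵐ[μ] W) (hW2 : Integrable (fun ω => W ω ^ 2) μ)
    (hlam : 0 < lam) (hsuper : 1 < lam * ∫ ω, W ω ^ 2 ∂μ) :
    ∀ᶠ t in 𝓝[>] 0, t ≤ phiOne μ W (lam * t) := by
  have hscale : Tendsto (fun t => lam * t) (𝓝[>] 0) (𝓝[>] 0) := by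
    simpa using TendstoNhdsWithinIoi.const_mul hlam (tendsto_id (x := 𝓝[>] (0 : ℝ)))
  have hslope := ((tendsto_phiOne_div_nhdsGT_zero hW hW2).comp hscale).const_mul lam
  filter_upwards [hslope.eventually_const_lt hsuper, self_mem_nhdsWithin] with t h ht
  simp only [Function.comp_apply, ← mul_div_assoc, mul_div_mul_left _ _ hlam.ne'] at h
  exact ((one_lt_div ht).1 h).le

lemma exists_phiOne_mul_lt (hW : 0 ≤ᵐ[μ] W) (hW2 : Integrable (fun ω => W ω ^ 2) μ)
    (hlam : 0 < lam) : ∃ t, 0 < t ∧ phiOne μ W (lam * t) < t := by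
  have hslope := (tendsto_phiOne_div_atTop hW hW2).eventually_lt_const (inv_pos.2 hlam)
  obtain ⟨s, hs, hs0⟩ := (hslope.and (eventually_gt_atTop 0)).exists
  refine ⟨s / lam, div_pos hs0 hlam, ?_⟩
  rwa [mul_div_cancel₀ _ hlam.ne', div_eq_inv_mul, ← div_lt_iff₀ hs0]

end PhiOne

theorem stmt_9_general {Ω : Type*} [MeasurableSpace Ω] {μ : Measure Ω} {W : Ω → ℝ}
    (hW : 0 ≤ᵐ[μ] W) (hW2 : Integrable (fun ω => W ω ^ 2) μ)
    {lam : ℝ} (hlam : 1 < lam * ∫ ω, W ω ^ 2 ∂μ)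
    {θ : ℝ} (hθ : θ = diagonalCrossing fun t => phiOne μ W (lam * t)) :
    0 < 1 - lam * ∫ ω, W ω ^ 2 * Real.exp (-(W ω) * (lam * θ)) ∂μ := by
  have hlam0 : 0 < lam :=
    pos_of_mul_pos_left (one_pos.trans hlam) (integral_nonneg fun ω => sq_nonneg (W ω))
  have hW0 : ¬ W =ᵐ[μ] 0 := fun h => by
    have : ∫ ω, W ω ^ 2 ∂μ = 0 := integral_eq_zero_of_ae (h.mono fun ω hω => by simp [hω])
    norm_num [this] at hlam
  have hbelow := exists_phiOne_mul_lt hW hW2 hlam0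
  have hθ0 : 0 < θ :=
    hθ ▸ diagonalCrossing_pos (eventually_le_phiOne_mul hW hW2 hlam0 hlam) hbelow
  have hcont : ContinuousAt (fun t => phiOne μ W (lam * t)) θ :=
    (continuousAt_phiOne hW hW2 (mul_pos hlam0 hθ0)).comp (f := fun t => lam * t) (by fun_prop)
  have hφθ : phiOne μ W (lam * θ) ≤ θ := by
    subst hθ
    exact apply_diagonalCrossing_le hcont hbelow
  have htangent := mul_integral_sq_mul_exp_neg_mul_lt_phiOne hW hW0 hW2 (mul_pos hlam0 hθ0)
  rw [sub_pos]
  exact lt_of_mul_lt_mul_left (by linarith) hθ0.le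

/-- For every `λ > λ_crit`, `β(λ) = 1 - λ E[W² e^{-W λ θ(λ)}] > 0`. -/
theorem stmt_9
    {Ω : Type*} [MeasurableSpace Ω] (P : Measure Ω) [IsProbabilityMeasure P]
    (W : Ω → ℝ) (hWmeas : Measurable W)
    (hWpos : ∀ᵐ ω ∂P, 0 < W ω)
    (hW2 : Integrable (fun ω => (W ω) ^ 2) P)
    (lamCrit : ℝ) (hlamCrit : lamCrit = (∫ ω, (W ω) ^ 2 ∂P)⁻¹)
    (φ1 : ℝ → ℝ)
    (hφ1 : ∀ t, φ1 t = ∫ ω, W ω * (1 - Real.exp (-(W ω) * t)) ∂P)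
    (θ : ℝ → ℝ)
    (hθ : ∀ lam, θ lam = sInf {t : ℝ | 0 < t ∧ φ1 (lam * t) - t < 0})
    (β : ℝ → ℝ)
    (hβ : ∀ lam, β lam =
      1 - lam * ∫ ω, (W ω) ^ 2 * Real.exp (-(W ω) * (lam * θ lam)) ∂P) :
    ∀ lam : ℝ, lamCrit < lam → 0 < β lam := by
  intro lam hlam
  have hpos : 0 < ∫ ω, W ω ^ 2 ∂P := integral_pos_of_ae_pos hW2 (hWpos.mono fun _ h => pow_pos h 2)
  have hsuper : 1 < lam * ∫ ω, W ω ^ 2 ∂P := (inv_lt_iff_one_lt_mul₀ hpos).1 (hlamCrit ▸ hlam)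
  have hθ' : θ lam = diagonalCrossing fun t => phiOne P W (lam * t) := by
    simp only [hθ, hφ1, sub_neg, diagonalCrossing, phiOne]
  exact hβ lam ▸ stmt_9_general (hWpos.mono fun _ => le_of_lt) hW2 hsuper hθ'
end

section
/- sup_{t ≥ 0} |𝔼[W_n² e^{−W_n t}] − 𝔼[W² e^{−W t}]| → 0 as n → ∞. -/
open MeasureTheory Filter Topology Set

open scoped NNReal BoundedContinuousFunction

/-! Let `φ ≥ 0` be a weight of subexponential growth on `[0, ∞)`, such as `x ↦ x ^ 2`. The functions
`t ↦ 𝔼[φ(Wₙ) e^{-Wₙ t}]` on `[0, ∞)` are nonnegative and antitone, and the limit function is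
continuous and vanishes at infinity, so by Pólya's monotonicity argument pointwise convergence is
automatically uniform. For `t > 0` pointwise convergence follows from convergence in distribution,
because `x ↦ φ(x) e^{-xt}` is continuous and bounded on `[0, ∞)`; at `t = 0` this function may be
unbounded, and the convergence of moments takes over. -/

section Polya

variable {ι α : Type*} {l : Filter ι} [LinearOrder α] [TopologicalSpace α] [OrderTopology α]
  {G : ι → α → ℝ} {g : α → ℝ}

theorem tendstoLocallyUniformly_of_antitone (hG : ∀ i, Antitone (G i)) (hg : Continuous g)
    (hlim : ∀ x, Tendsto (fun i => G i x) l (𝓝 (g x))) : TendstoLocallyUniformly G g l := by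
  rw [Metric.tendstoLocallyUniformly_iff]
  intro ε hε x
  have hε3 : 0 < ε / 3 := by positivity
  obtain ⟨a, b, hx, hnhds, hball⟩ := exists_Icc_mem_subset_of_mem_nhds
    (hg.continuousAt.preimage_mem_nhds (Metric.ball_mem_nhds (g x) hε3))
  have hosc : ∀ y ∈ Icc a b, dist (g y) (g x) < ε / 3 := fun y hy => hball hy
  have hab : a ≤ b := hx.1.trans hx.2
  have ha := hosc a (left_mem_Icc.2 hab)
  have hb := hosc b (right_mem_Icc.2 hab)
  refine ⟨Icc a b, hnhds, ?_⟩
  filter_upwards [Metric.tendsto_nhds.1 (hlim a) (ε / 3) hε3,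
    Metric.tendsto_nhds.1 (hlim b) (ε / 3) hε3] with i hia hib y hy
  have hy' := hosc y hy
  have hGa : G i y ≤ G i a := hG i hy.1
  have hGb : G i b ≤ G i y := hG i hy.2
  rw [Real.dist_eq, abs_lt] at *
  constructor <;> linarith

theorem tendstoUniformly_of_antitone_of_tendsto_zero [OrderBot α] [CompactIccSpace α]
    (hG : ∀ i, Antitone (G i)) (hG0 : ∀ i x, 0 ≤ G i x) (hg : Continuous g)
    (hg0 : Tendsto g atTop (𝓝 0)) (hlim : ∀ x, Tendsto (fun i => G i x) l (𝓝 (g x))) :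
    TendstoUniformly G g l := by
  rw [Metric.tendstoUniformly_iff]
  intro ε hε
  have hε3 : 0 < ε / 3 := by positivity
  obtain ⟨T, hT⟩ := eventually_atTop.1 (Metric.tendsto_nhds.1 hg0 (ε / 3) hε3)
  have hcompact : TendstoUniformlyOn G g l (Icc ⊥ T) :=
    (tendstoLocallyUniformlyOn_iff_tendstoUniformlyOn_of_compact isCompact_Icc).1
      (tendstoLocallyUniformly_of_antitone hG hg hlim).tendstoLocallyUniformlyOn
  filter_upwards [Metric.tendstoUniformlyOn_iff.1 hcompact ε hε,
    Metric.tendsto_nhds.1 (hlim T) (ε / 3) hε3] with i hi hiT x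
  rcases le_total x T with hxT | hTx
  · exact hi x ⟨bot_le, hxT⟩
  · have hgT := hT T le_rfl
    have hgx := hT x hTx
    have hGT : G i x ≤ G i T := hG i hTx
    have hGx := hG0 i x
    rw [Real.dist_eq, abs_lt] at *
    constructor <;> linarith

end Polya

/-- The weighted Laplace transform `t ↦ 𝔼[Y e^{-X t}]` of `X`, with weight `Y`. The argument is
of type `ℝ≥0`, since only `t ≥ 0` matters for nonnegative `X`. -/
noncomputable def weightedLaplace {Ω : Type*} [MeasurableSpace Ω] (μ : Measure Ω) (Y X : Ω → ℝ)
    (t : ℝ≥0) : ℝ :=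
  ∫ ω, Y ω * Real.exp (-(X ω) * t) ∂μ

section WeightedLaplace

variable {Ω : Type*} [MeasurableSpace Ω] {μ : Measure Ω} {X Y : Ω → ℝ}

theorem norm_mul_exp_neg_mul_le {x : ℝ} (hx : 0 ≤ x) (y : ℝ) (t : ℝ≥0) :
    ‖y * Real.exp (-x * t)‖ ≤ ‖y‖ := by
  rw [norm_mul, Real.norm_of_nonneg (Real.exp_nonneg _)]
  refine mul_le_of_le_one_right (norm_nonneg y) (Real.exp_le_one_iff.2 ?_)
  exact mul_nonpos_of_nonpos_of_nonneg (neg_nonpos.2 hx) t.2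

theorem aestronglyMeasurable_mul_exp_neg_mul (hX : AEMeasurable X μ) (hY : AEStronglyMeasurable Y μ)
    (t : ℝ≥0) : AEStronglyMeasurable (fun ω => Y ω * Real.exp (-(X ω) * t)) μ :=
  hY.mul (hX.neg.mul_const _).exp.aestronglyMeasurable

theorem integrable_mul_exp_neg_mul (hX : AEMeasurable X μ) (hX0 : ∀ᵐ ω ∂μ, 0 ≤ X ω)
    (hY : Integrable Y μ) (t : ℝ≥0) :
    Integrable (fun ω => Y ω * Real.exp (-(X ω) * t)) μ :=
  hY.mono (aestronglyMeasurable_mul_exp_neg_mul hX hY.1 t) <|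
    hX0.mono fun ω hω => norm_mul_exp_neg_mul_le hω (Y ω) t

theorem weightedLaplace_zero : weightedLaplace μ Y X 0 = ∫ ω, Y ω ∂μ := by
  simp [weightedLaplace]

theorem weightedLaplace_nonneg (hY0 : ∀ᵐ ω ∂μ, 0 ≤ Y ω) (t : ℝ≥0) :
    0 ≤ weightedLaplace μ Y X t :=
  integral_nonneg_of_ae <| hY0.mono fun _ hω => mul_nonneg hω (Real.exp_nonneg _)

theorem antitone_weightedLaplace (hX : AEMeasurable X μ) (hX0 : ∀ᵐ ω ∂μ, 0 ≤ X ω)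
    (hY : Integrable Y μ) (hY0 : ∀ᵐ ω ∂μ, 0 ≤ Y ω) : Antitone (weightedLaplace μ Y X) := by
  intro s t hst
  refine integral_mono_ae (integrable_mul_exp_neg_mul hX hX0 hY t)
    (integrable_mul_exp_neg_mul hX hX0 hY s) ?_
  filter_upwards [hX0, hY0] with ω hXω hYω
  refine mul_le_mul_of_nonneg_left (Real.exp_le_exp.2 ?_) hYω
  exact mul_le_mul_of_nonpos_left (NNReal.coe_le_coe.2 hst) (neg_nonpos.2 hXω)

theorem continuous_weightedLaplace (hX : AEMeasurable X μ) (hX0 : ∀ᵐ ω ∂μ, 0 ≤ X ω)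
    (hY : Integrable Y μ) : Continuous (weightedLaplace μ Y X) :=
  continuous_of_dominated (fun t => aestronglyMeasurable_mul_exp_neg_mul hX hY.1 t)
    (fun t => hX0.mono fun ω hω => norm_mul_exp_neg_mul_le hω (Y ω) t) hY.norm
    (ae_of_all _ fun ω => by fun_prop)

theorem tendsto_weightedLaplace_atTop (hX : AEMeasurable X μ) (hXpos : ∀ᵐ ω ∂μ, 0 < X ω)
    (hY : Integrable Y μ) : Tendsto (weightedLaplace μ Y X) atTop (𝓝 0) := by
  have hpointwise : ∀ᵐ ω ∂μ,
      Tendsto (fun t : ℝ≥0 => Y ω * Real.exp (-(X ω) * t)) atTop (𝓝 0) := by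
    filter_upwards [hXpos] with ω hω
    have hexponent : Tendsto (fun t : ℝ≥0 => -(X ω) * (t : ℝ)) atTop atBot :=
      (NNReal.tendsto_coe_atTop.2 tendsto_id).const_mul_atTop_of_neg (neg_neg_of_pos hω)
    simpa using (Real.tendsto_exp_atBot.comp hexponent).const_mul (Y ω)
  rw [← integral_zero Ω ℝ (μ := μ)]
  exact tendsto_integral_filter_of_dominated_convergence (fun ω => ‖Y ω‖)
    (.of_forall fun t => aestronglyMeasurable_mul_exp_neg_mul hX hY.1 t)
    (.of_forall fun t => hXpos.mono fun ω hω => norm_mul_exp_neg_mul_le hω.le (Y ω) t)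
    hY.norm hpointwise

end WeightedLaplace

section WeakConvergence

theorem integral_comp_abs_of_nonneg {Ω : Type*} [MeasurableSpace Ω] {μ : Measure Ω} {X : Ω → ℝ}
    (ψ : ℝ → ℝ) (hX : ∀ᵐ ω ∂μ, 0 ≤ X ω) : ∫ ω, ψ |X ω| ∂μ = ∫ ω, ψ (X ω) ∂μ :=
  integral_congr_ae <| hX.mono fun _ hω => congrArg ψ (abs_of_nonneg hω)

variable {ι : Type*} {l : Filter ι} {Ω : Type*} [MeasurableSpace Ω] {Ω' : ι → Type*}
  [∀ i, MeasurableSpace (Ω' i)] {P : Measure Ω} {Pn : ∀ i, Measure (Ω' i)} {W : Ω → ℝ}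
  {Wn : ∀ i, Ω' i → ℝ}

theorem tendsto_integral_comp_of_isBigO_one {ψ : ℝ → ℝ} (hψ : ContinuousOn ψ (Ici 0))
    (hψO : ψ =O[atTop] (1 : ℝ → ℝ)) (hW : ∀ᵐ ω ∂P, 0 ≤ W ω) (hWn : ∀ i, ∀ᵐ ω ∂Pn i, 0 ≤ Wn i ω)
    (hdist : ∀ f : ℝ →ᵇ ℝ,
      Tendsto (fun i => ∫ ω, f (Wn i ω) ∂Pn i) l (𝓝 (∫ ω, f (W ω) ∂P))) :
    Tendsto (fun i => ∫ ω, ψ (Wn i ω) ∂Pn i) l (𝓝 (∫ ω, ψ (W ω) ∂P)) := by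
  -- `ψ` need not be bounded or continuous on `ℝ`; its even extension `x ↦ ψ |x|` is both.
  have hcont : Continuous fun x => ψ |x| := hψ.comp_continuous continuous_abs abs_nonneg
  have heven : Function.Even fun x => ψ |x| := fun x => congrArg ψ (abs_neg x)
  have habsO : (fun x => ψ |x|) =O[atTop] (1 : ℝ → ℝ) :=
    hψO.congr' ((eventually_ge_atTop 0).mono fun x hx => congrArg ψ (abs_of_nonneg hx).symm) .rfl
  obtain ⟨C, hC⟩ :=
    ((hcont.isBounded_range_iff_isBigO_atTop_of_even heven).2 habsO).exists_norm_le
  have hf := hdist (.ofNormedAddCommGroup _ hcont C fun x => hC _ (mem_range_self x))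
  rw [← integral_comp_abs_of_nonneg ψ hW]
  exact hf.congr fun i => integral_comp_abs_of_nonneg ψ (hWn i)

variable {φ : ℝ → ℝ}

theorem tendsto_weightedLaplace_comp (hφ : ContinuousOn φ (Ici 0))
    (hφO : ∀ b : ℝ, 0 < b → φ =O[atTop] fun x => Real.exp (b * x))
    (hW : ∀ᵐ ω ∂P, 0 ≤ W ω) (hWn : ∀ i, ∀ᵐ ω ∂Pn i, 0 ≤ Wn i ω)
    (hdist : ∀ f : ℝ →ᵇ ℝ,
      Tendsto (fun i => ∫ ω, f (Wn i ω) ∂Pn i) l (𝓝 (∫ ω, f (W ω) ∂P)))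
    (hmom : Tendsto (fun i => ∫ ω, φ (Wn i ω) ∂Pn i) l (𝓝 (∫ ω, φ (W ω) ∂P))) (t : ℝ≥0) :
    Tendsto (fun i => weightedLaplace (Pn i) (fun ω => φ (Wn i ω)) (Wn i) t) l
      (𝓝 (weightedLaplace P (fun ω => φ (W ω)) W t)) := by
  rcases eq_zero_or_pos t with rfl | ht
  · simpa only [weightedLaplace_zero] using hmom
  · have hcont : ContinuousOn (fun x => φ x * Real.exp (-x * t)) (Ici 0) :=
      hφ.mul (by fun_prop)
    have hbdd : (fun x => φ x * Real.exp (-x * t)) =O[atTop] (1 : ℝ → ℝ) := by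
      refine ((hφO t ht).mul (Asymptotics.isBigO_refl _ _)).congr_right fun x => ?_
      rw [← Real.exp_add, mul_comm (t : ℝ), neg_mul, add_neg_cancel, Real.exp_zero, Pi.one_apply]
    exact tendsto_integral_comp_of_isBigO_one hcont hbdd hW hWn hdist

theorem stmt_11_general (hφ : ContinuousOn φ (Ici 0)) (hφ0 : ∀ x, 0 ≤ x → 0 ≤ φ x)
    (hφO : ∀ b : ℝ, 0 < b → φ =O[atTop] fun x => Real.exp (b * x))
    (hWmeas : AEMeasurable W P) (hWnmeas : ∀ i, AEMeasurable (Wn i) (Pn i))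
    (hWpos : ∀ᵐ ω ∂P, 0 < W ω) (hWn0 : ∀ i, ∀ᵐ ω ∂Pn i, 0 ≤ Wn i ω)
    (hdist : ∀ f : ℝ →ᵇ ℝ,
      Tendsto (fun i => ∫ ω, f (Wn i ω) ∂Pn i) l (𝓝 (∫ ω, f (W ω) ∂P)))
    (hWint : Integrable (fun ω => φ (W ω)) P)
    (hWnint : ∀ i, Integrable (fun ω => φ (Wn i ω)) (Pn i))
    (hmom : Tendsto (fun i => ∫ ω, φ (Wn i ω) ∂Pn i) l (𝓝 (∫ ω, φ (W ω) ∂P))) :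
    TendstoUniformlyOn
      (fun i t => ∫ ω, φ (Wn i ω) * Real.exp (-(Wn i ω) * t) ∂Pn i)
      (fun t => ∫ ω, φ (W ω) * Real.exp (-(W ω) * t) ∂P) l (Ici 0) := by
  have hW0 : ∀ᵐ ω ∂P, 0 ≤ W ω := hWpos.mono fun _ => le_of_lt
  have hφWn0 : ∀ i, ∀ᵐ ω ∂Pn i, 0 ≤ φ (Wn i ω) := fun i => (hWn0 i).mono fun _ => hφ0 _
  have huniform : TendstoUniformly
      (fun i => weightedLaplace (Pn i) (fun ω => φ (Wn i ω)) (Wn i))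
      (weightedLaplace P (fun ω => φ (W ω)) W) l :=
    tendstoUniformly_of_antitone_of_tendsto_zero
      (fun i => antitone_weightedLaplace (hWnmeas i) (hWn0 i) (hWnint i) (hφWn0 i))
      (fun i => weightedLaplace_nonneg (hφWn0 i))
      (continuous_weightedLaplace hWmeas hW0 hWint)
      (tendsto_weightedLaplace_atTop hWmeas hWpos hWint)
      (tendsto_weightedLaplace_comp hφ hφO hW0 hWn0 hdist hmom)
  exact tendstoUniformlyOn_iff_tendstoUniformly_comp_coe.2 huniform

end WeakConvergence

/-- Under Assumption 1, `sup_{t ≥ 0} |E[Wₙ² e^{-Wₙ t}] - E[W² e^{-W t}]| → 0`. -/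
theorem stmt_11
    {Ω : Type*} [MeasurableSpace Ω] (P : Measure Ω) [IsProbabilityMeasure P]
    (W : Ω → ℝ) (Wn : ℕ → Ω → ℝ)
    (hWmeas : Measurable W) (hWnmeas : ∀ n, Measurable (Wn n))
    (hWpos : ∀ᵐ ω ∂P, 0 < W ω) (hWnpos : ∀ n, ∀ᵐ ω ∂P, 0 < Wn n ω)
    (hdist : ∀ f : BoundedContinuousFunction ℝ ℝ,
      Tendsto (fun n => ∫ ω, f (Wn n ω) ∂P) atTop (𝓝 (∫ ω, f (W ω) ∂P)))
    (hW2 : Integrable (fun ω => (W ω) ^ 2) P)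
    (hWn2 : ∀ n, Integrable (fun ω => (Wn n ω) ^ 2) P)
    (hmom : Tendsto (fun n => ∫ ω, (Wn n ω) ^ 2 ∂P) atTop (𝓝 (∫ ω, (W ω) ^ 2 ∂P))) :
    TendstoUniformlyOn
      (fun n t => ∫ ω, (Wn n ω) ^ 2 * Real.exp (-(Wn n ω) * t) ∂P)
      (fun t => ∫ ω, (W ω) ^ 2 * Real.exp (-(W ω) * t) ∂P)
      atTop (Ici 0) :=
  stmt_11_general (φ := (· ^ 2)) (continuous_pow 2).continuousOn (fun x _ => sq_nonneg x)
    (fun _ hb => (isLittleO_pow_exp_pos_mul_atTop 2 hb).isBigO) hWmeas.aemeasurable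
    (fun n => (hWnmeas n).aemeasurable) hWpos (fun n => (hWnpos n).mono fun _ => le_of_lt)
    hdist hW2 hWn2 hmom
end

section
/- For every s ≥ 0, t ≥ 0 and every k ∈ {0,1,2}: 𝔼[W_n^k e^{−W_n s}(1 − e^{−W_n t})] → 𝔼[W^k e^{−W s}(1 − e^{−W t})] as n → ∞. -/
open MeasureTheory Filter Topology Set

/-!
Integration of a nonnegative continuous function is lower semicontinuous for weak convergence, being
a supremum of integrals of bounded continuous functions. If `|g| ≤ V` and the integrals of `V`
converge, lower semicontinuity applied to `V + g` and to `V - g` bounds the integrals of `g` from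
below and from above. On `[0, ∞)` the functions `x ^ k * exp (-x * s) * (1 - exp (-x * t))` are
dominated by `V x = 1 + x ^ m` whenever `k ≤ m` and `s, s + t ≥ 0`.
-/

open scoped NNReal ENNReal

section WeakConvergence

variable {E : Type*} [MeasurableSpace E]

lemma lintegral_eq_iSup_lintegral_min_natCast (μ : Measure E) {f : E → ℝ≥0} (hf : Measurable f) :
    ∫⁻ x, f x ∂μ = ⨆ M : ℕ, ∫⁻ x, (min (f x) M : ℝ≥0) ∂μ := by
  rw [← lintegral_iSup (fun M ↦ by fun_prop) fun M N hMN x ↦ by dsimp only; gcongr]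
  refine lintegral_congr fun x ↦ le_antisymm ?_ (iSup_le fun M ↦ by gcongr; exact min_le_left _ _)
  obtain ⟨M, hM⟩ := exists_nat_ge (f x)
  exact le_iSup_of_le M (by rw [min_eq_left hM])

variable [TopologicalSpace E] [OpensMeasurableSpace E]

lemma lowerSemicontinuous_lintegral_finiteMeasure (f : C(E, ℝ≥0)) :
    LowerSemicontinuous fun μ : FiniteMeasure E ↦ ∫⁻ x, f x ∂μ := by
  simp only [lintegral_eq_iSup_lintegral_min_natCast _ f.continuous.measurable]
  refine lowerSemicontinuous_iSup fun M ↦ Continuous.lowerSemicontinuous ?_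
  let truncation : BoundedContinuousFunction E ℝ≥0 :=
    .mkOfBound (f ⊓ .const E (M : ℝ≥0)) M fun x y ↦ by
      rw [NNReal.dist_eq]
      exact abs_sub_le_of_nonneg_of_le (NNReal.coe_nonneg _) (mod_cast min_le_right _ _)
        (NNReal.coe_nonneg _) (mod_cast min_le_right _ _)
  exact FiniteMeasure.continuous_lintegral_boundedContinuousFunction truncation

end WeakConvergence

section ConvergenceInDistribution

variable {ι E Ω' : Type*} {Ω : ι → Type*} {l : Filter ι} [∀ i, MeasurableSpace (Ω i)]
  {μ : ∀ i, Measure (Ω i)} [∀ i, IsProbabilityMeasure (μ i)]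
  [MeasurableSpace Ω'] {μ' : Measure Ω'} [IsProbabilityMeasure μ']
  [TopologicalSpace E] [MeasurableSpace E] [OpensMeasurableSpace E]

lemma tendstoInDistribution_iff_forall_integral_tendsto {X : ∀ i, Ω i → E} {Z : Ω' → E}
    (hX : ∀ i, AEMeasurable (X i) (μ i)) (hZ : AEMeasurable Z μ') :
    TendstoInDistribution X l Z μ μ' ↔ ∀ f : BoundedContinuousFunction E ℝ,
      Tendsto (fun i ↦ ∫ ω, f (X i ω) ∂μ i) l (𝓝 (∫ ω, f (Z ω) ∂μ')) := by
  have law_iff : TendstoInDistribution X l Z μ μ' ↔ ∀ f : BoundedContinuousFunction E ℝ,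
      Tendsto (fun i ↦ ∫ x, f x ∂(μ i).map (X i)) l (𝓝 (∫ x, f x ∂μ'.map Z)) :=
    ⟨fun h ↦ ProbabilityMeasure.tendsto_iff_forall_integral_tendsto.1 h.tendsto,
      fun h ↦ ⟨hX, hZ, ProbabilityMeasure.tendsto_iff_forall_integral_tendsto.2 h⟩⟩
  simp only [law_iff, fun f : BoundedContinuousFunction E ℝ ↦
      integral_map hZ f.continuous.aestronglyMeasurable,
    fun i (f : BoundedContinuousFunction E ℝ) ↦
      integral_map (hX i) f.continuous.aestronglyMeasurable]

lemma eventually_lt_integral_of_tendstoInDistribution {Y : ∀ i, Ω i → ℝ} {Z : Ω' → ℝ}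
    (h : TendstoInDistribution Y l Z μ μ')
    (hY : ∀ᶠ i in l, Integrable (Y i) (μ i)) (hY₀ : ∀ᶠ i in l, 0 ≤ᵐ[μ i] Y i)
    (hZ : Integrable Z μ') (hZ₀ : 0 ≤ᵐ[μ'] Z) {c : ℝ} (hc : c < ∫ ω, Z ω ∂μ') :
    ∀ᶠ i in l, c < ∫ ω, Y i ω ∂μ i := by
  obtain hc₀ | hc₀ := lt_or_ge c 0
  · filter_upwards [hY₀] with i hi using hc₀.trans_le (integral_nonneg_of_ae hi)
  have lsc := lowerSemicontinuous_lintegral_finiteMeasure (E := ℝ)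
    ⟨Real.toNNReal, continuous_real_toNNReal⟩
  have h_law := (ProbabilityMeasure.tendsto_nhds_iff_toFiniteMeasure_tendsto_nhds _).1 h.tendsto
  have lt_law : ENNReal.ofReal c < ∫⁻ y, ENNReal.ofReal y ∂μ'.map Z := by
    rwa [lintegral_map' (by fun_prop) h.aemeasurable_limit,
      ← ofReal_integral_eq_lintegral_ofReal hZ hZ₀, ENNReal.ofReal_lt_ofReal_iff_of_nonneg hc₀]
  filter_upwards [h_law.eventually (lsc _ _ lt_law), hY, hY₀] with i lt_law_i hi hi₀
  change ENNReal.ofReal c < ∫⁻ y, ENNReal.ofReal y ∂(μ i).map (Y i) at lt_law_i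
  rwa [lintegral_map' (by fun_prop) (h.forall_aemeasurable i),
    ← ofReal_integral_eq_lintegral_ofReal hi hi₀,
    ENNReal.ofReal_lt_ofReal_iff_of_nonneg hc₀] at lt_law_i

section Domination

variable {X : ∀ i, Ω i → E} {Z : Ω' → E} {g V : E → ℝ}

lemma eventually_lt_integral_comp_of_abs_le (h : TendstoInDistribution X l Z μ μ')
    (hg : Continuous g) (hV : Continuous V)
    (hgX : ∀ᶠ i in l, ∀ᵐ ω ∂μ i, |g (X i ω)| ≤ V (X i ω)) (hgZ : ∀ᵐ ω ∂μ', |g (Z ω)| ≤ V (Z ω))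
    (hVX : ∀ᶠ i in l, Integrable (fun ω ↦ V (X i ω)) (μ i))
    (hVZ : Integrable (fun ω ↦ V (Z ω)) μ')
    (hlim : Tendsto (fun i ↦ ∫ ω, V (X i ω) ∂μ i) l (𝓝 (∫ ω, V (Z ω) ∂μ')))
    {a : ℝ} (ha : a < ∫ ω, g (Z ω) ∂μ') :
    ∀ᶠ i in l, a < ∫ ω, g (X i ω) ∂μ i := by
  have hgVX : ∀ᶠ i in l, Integrable (fun ω ↦ g (X i ω)) (μ i) := by
    filter_upwards [hVX, hgX] with i hVi hgi
    exact hVi.mono' (hg.measurable.comp_aemeasurable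
      (h.forall_aemeasurable i)).aestronglyMeasurable hgi
  have hgVZ : Integrable (fun ω ↦ g (Z ω)) μ' :=
    hVZ.mono' (hg.measurable.comp_aemeasurable h.aemeasurable_limit).aestronglyMeasurable hgZ
  have sum_lower : ∀ᶠ i in l,
      (∫ ω, V (Z ω) ∂μ') + (a + ∫ ω, g (Z ω) ∂μ') / 2 < ∫ ω, V (X i ω) + g (X i ω) ∂μ i := by
    refine eventually_lt_integral_of_tendstoInDistribution
      (h.continuous_comp (hV.add hg)) ?_ ?_ (hVZ.add hgVZ) ?_ ?_
    · filter_upwards [hVX, hgVX] with i hVi hgi using hVi.add hgi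
    · filter_upwards [hgX] with i hi
      filter_upwards [hi] with ω hω using neg_le_iff_add_nonneg'.1 (abs_le.1 hω).1
    · filter_upwards [hgZ] with ω hω using neg_le_iff_add_nonneg'.1 (abs_le.1 hω).1
    · change _ < ∫ ω, V (Z ω) + g (Z ω) ∂μ'
      rw [integral_add hVZ hgVZ]
      linarith
  have V_upper : ∀ᶠ i in l,
      ∫ ω, V (X i ω) ∂μ i < (∫ ω, V (Z ω) ∂μ') + ((∫ ω, g (Z ω) ∂μ') - a) / 2 :=
    hlim.eventually_lt_const (by linarith)
  filter_upwards [sum_lower, V_upper, hVX, hgVX] with i h_sum h_V hVi hgi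
  rw [integral_add hVi hgi] at h_sum
  linarith

theorem tendsto_integral_comp_of_abs_le (h : TendstoInDistribution X l Z μ μ')
    (hg : Continuous g) (hV : Continuous V)
    (hgX : ∀ᶠ i in l, ∀ᵐ ω ∂μ i, |g (X i ω)| ≤ V (X i ω)) (hgZ : ∀ᵐ ω ∂μ', |g (Z ω)| ≤ V (Z ω))
    (hVX : ∀ᶠ i in l, Integrable (fun ω ↦ V (X i ω)) (μ i))
    (hVZ : Integrable (fun ω ↦ V (Z ω)) μ')
    (hlim : Tendsto (fun i ↦ ∫ ω, V (X i ω) ∂μ i) l (𝓝 (∫ ω, V (Z ω) ∂μ'))) :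
    Tendsto (fun i ↦ ∫ ω, g (X i ω) ∂μ i) l (𝓝 (∫ ω, g (Z ω) ∂μ')) := by
  refine tendsto_order.2 ⟨fun a ha ↦
    eventually_lt_integral_comp_of_abs_le h hg hV hgX hgZ hVX hVZ hlim ha, fun a ha ↦ ?_⟩
  have neg_lower : ∀ᶠ i in l, -a < ∫ ω, -g (X i ω) ∂μ i :=
    eventually_lt_integral_comp_of_abs_le h hg.neg hV (by simpa only [Pi.neg_apply, abs_neg])
      (by simpa only [Pi.neg_apply, abs_neg]) hVX hVZ hlim
      (by simpa only [Pi.neg_apply, integral_neg, neg_lt_neg_iff])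
  simpa only [integral_neg, neg_lt_neg_iff] using neg_lower

end Domination

theorem tendsto_integral_comp_of_abs_le_one_add_pow {X : ∀ i, Ω i → ℝ} {Z : Ω' → ℝ} {g : ℝ → ℝ}
    {m : ℕ} (h : TendstoInDistribution X l Z μ μ') (hg : Continuous g)
    (hg_le : ∀ x, 0 ≤ x → |g x| ≤ 1 + x ^ m)
    (hX₀ : ∀ᶠ i in l, ∀ᵐ ω ∂μ i, 0 ≤ X i ω) (hZ₀ : ∀ᵐ ω ∂μ', 0 ≤ Z ω)
    (hXm : ∀ᶠ i in l, Integrable (fun ω ↦ X i ω ^ m) (μ i))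
    (hZm : Integrable (fun ω ↦ Z ω ^ m) μ')
    (hlim : Tendsto (fun i ↦ ∫ ω, X i ω ^ m ∂μ i) l (𝓝 (∫ ω, Z ω ^ m ∂μ'))) :
    Tendsto (fun i ↦ ∫ ω, g (X i ω) ∂μ i) l (𝓝 (∫ ω, g (Z ω) ∂μ')) := by
  refine tendsto_integral_comp_of_abs_le (V := fun x ↦ 1 + x ^ m) h hg (by fun_prop)
    (hX₀.mono fun i hi ↦ hi.mono fun ω ↦ hg_le _) (hZ₀.mono fun ω ↦ hg_le _)
    (hXm.mono fun i hi ↦ (integrable_const 1).add hi) ((integrable_const 1).add hZm) ?_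
  rw [integral_add (integrable_const 1) hZm, integral_const, probReal_univ, one_smul]
  refine (hlim.const_add 1).congr' ?_
  filter_upwards [hXm] with i hi
  rw [integral_add (integrable_const 1) hi, integral_const, probReal_univ, one_smul]

end ConvergenceInDistribution

lemma pow_le_one_add_pow {R : Type*} [Semiring R] [LinearOrder R] [IsOrderedRing R] {x : R}
    (hx : 0 ≤ x) {k m : ℕ} (hkm : k ≤ m) : x ^ k ≤ 1 + x ^ m := by
  obtain hx₁ | hx₁ := le_total x 1
  · exact (pow_le_one₀ hx hx₁).trans (le_add_of_nonneg_right (pow_nonneg hx m))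
  · exact (pow_le_pow_right₀ hx₁ hkm).trans (le_add_of_nonneg_left zero_le_one)

lemma abs_exp_neg_mul_one_sub_exp_neg_le_one {x s t : ℝ} (hx : 0 ≤ x) (hs : 0 ≤ s)
    (hst : 0 ≤ s + t) : |Real.exp (-x * s) * (1 - Real.exp (-x * t))| ≤ 1 := by
  have exp_le_one {r : ℝ} (hr : 0 ≤ r) : Real.exp (-x * r) ≤ 1 :=
    Real.exp_le_one_iff.2 (mul_nonpos_of_nonpos_of_nonneg (neg_nonpos.2 hx) hr)
  rw [mul_one_sub, ← Real.exp_add, ← mul_add]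
  exact abs_sub_le_of_nonneg_of_le (Real.exp_nonneg _) (exp_le_one hs) (Real.exp_nonneg _)
    (exp_le_one hst)

lemma abs_pow_mul_exp_mul_one_sub_exp_le {x s t : ℝ} (hx : 0 ≤ x) (hs : 0 ≤ s) (hst : 0 ≤ s + t)
    {k m : ℕ} (hkm : k ≤ m) :
    |x ^ k * Real.exp (-x * s) * (1 - Real.exp (-x * t))| ≤ 1 + x ^ m := by
  rw [mul_assoc, abs_mul, abs_of_nonneg (pow_nonneg hx k)]
  exact (mul_le_of_le_one_right (pow_nonneg hx k)
    (abs_exp_neg_mul_one_sub_exp_neg_le_one hx hs hst)).trans (pow_le_one_add_pow hx hkm)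

theorem stmt_12_general {ι Ω' : Type*} {Ω : ι → Type*} {l : Filter ι}
    [∀ i, MeasurableSpace (Ω i)] {μ : ∀ i, Measure (Ω i)} [∀ i, IsProbabilityMeasure (μ i)]
    [MeasurableSpace Ω'] {μ' : Measure Ω'} [IsProbabilityMeasure μ']
    {X : ∀ i, Ω i → ℝ} {Z : Ω' → ℝ} {m k : ℕ} {s t : ℝ} (h : TendstoInDistribution X l Z μ μ')
    (hX₀ : ∀ᶠ i in l, ∀ᵐ ω ∂μ i, 0 ≤ X i ω) (hZ₀ : ∀ᵐ ω ∂μ', 0 ≤ Z ω)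
    (hXm : ∀ᶠ i in l, Integrable (fun ω ↦ X i ω ^ m) (μ i))
    (hZm : Integrable (fun ω ↦ Z ω ^ m) μ')
    (hlim : Tendsto (fun i ↦ ∫ ω, X i ω ^ m ∂μ i) l (𝓝 (∫ ω, Z ω ^ m ∂μ')))
    (hkm : k ≤ m) (hs : 0 ≤ s) (hst : 0 ≤ s + t) :
    Tendsto (fun i ↦ ∫ ω, X i ω ^ k * Real.exp (-X i ω * s) * (1 - Real.exp (-X i ω * t)) ∂μ i) l
      (𝓝 (∫ ω, Z ω ^ k * Real.exp (-Z ω * s) * (1 - Real.exp (-Z ω * t)) ∂μ')) :=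
  tendsto_integral_comp_of_abs_le_one_add_pow
    (g := fun x ↦ x ^ k * Real.exp (-x * s) * (1 - Real.exp (-x * t))) h (by fun_prop)
    (fun _ hx ↦ abs_pow_mul_exp_mul_one_sub_exp_le hx hs hst hkm) hX₀ hZ₀ hXm hZm hlim

/-- Under Assumption 1, for all `s, t ≥ 0` and `k ∈ {0,1,2}`,
`E[Wₙᵏ e^{-Wₙ s}(1 - e^{-Wₙ t})] → E[Wᵏ e^{-W s}(1 - e^{-W t})]`. -/
theorem stmt_12
    {Ω : Type*} [MeasurableSpace Ω] (P : Measure Ω) [IsProbabilityMeasure P]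
    (W : Ω → ℝ) (Wn : ℕ → Ω → ℝ)
    (hWmeas : Measurable W) (hWnmeas : ∀ n, Measurable (Wn n))
    (hWpos : ∀ᵐ ω ∂P, 0 < W ω) (hWnpos : ∀ n, ∀ᵐ ω ∂P, 0 < Wn n ω)
    (hdist : ∀ f : BoundedContinuousFunction ℝ ℝ,
      Tendsto (fun n => ∫ ω, f (Wn n ω) ∂P) atTop (𝓝 (∫ ω, f (W ω) ∂P)))
    (hW2 : Integrable (fun ω => (W ω) ^ 2) P)
    (hWn2 : ∀ n, Integrable (fun ω => (Wn n ω) ^ 2) P)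
    (hmom : Tendsto (fun n => ∫ ω, (Wn n ω) ^ 2 ∂P) atTop (𝓝 (∫ ω, (W ω) ^ 2 ∂P))) :
    ∀ s : ℝ, 0 ≤ s → ∀ t : ℝ, 0 ≤ t → ∀ k ∈ ({0, 1, 2} : Set ℕ),
      Tendsto
        (fun n => ∫ ω,
          (Wn n ω) ^ k * Real.exp (-(Wn n ω) * s) * (1 - Real.exp (-(Wn n ω) * t)) ∂P)
        atTop
        (𝓝 (∫ ω, (W ω) ^ k * Real.exp (-(W ω) * s) * (1 - Real.exp (-(W ω) * t)) ∂P)) := by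
  have h_dist := (tendstoInDistribution_iff_forall_integral_tendsto
    (fun n ↦ (hWnmeas n).aemeasurable) hWmeas.aemeasurable).2 hdist
  exact fun s hs t ht k hk ↦ stmt_12_general h_dist
    (.of_forall fun n ↦ (hWnpos n).mono fun _ ↦ le_of_lt) (hWpos.mono fun _ ↦ le_of_lt)
    (.of_forall hWn2) hW2 hmom (by rcases hk with rfl | rfl | rfl <;> norm_num) hs
    (add_nonneg hs ht)
end

section
/- n^{−1} max_{1 ≤ j ≤ n} (w_j^{(n)})² → 0 as n → ∞. -/
open MeasureTheory Filter Topology Set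

/-!
The part of `n⁻¹ ∑ⱼ wⱼ²` carried by the excesses of `wⱼ²` over a level `k` converges to
`𝔼[W²] - 𝔼[min (W², k)]`: weak convergence handles the truncated part, the moment hypothesis the
whole. This limit is small for large `k`, while the largest `wⱼ²` exceeds `k` by at most the sum
of all the excesses, and `n⁻¹ k → 0`.
-/

section Truncation

variable {Ω : Type*} [MeasurableSpace Ω] {μ : Measure Ω} {X : Ω → ℝ}

theorem tendsto_integral_min_atTop (hX : Integrable X μ) :
    Tendsto (fun k : ℝ => ∫ ω, min (X ω) k ∂μ) atTop (𝓝 (∫ ω, X ω ∂μ)) := by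
  refine tendsto_integral_filter_of_dominated_convergence (fun ω => |X ω|)
    (.of_forall fun k => hX.aestronglyMeasurable.inf aestronglyMeasurable_const)
    ?_ hX.abs (.of_forall fun ω => ?_)
  · filter_upwards [eventually_ge_atTop 0] with k hk
    refine .of_forall fun ω => abs_le.2 ⟨?_, (min_le_left _ _).trans (le_abs_self _)⟩
    exact le_min (neg_abs_le _) ((neg_nonpos.2 (abs_nonneg _)).trans hk)
  · refine tendsto_const_nhds.congr' ?_
    filter_upwards [eventually_ge_atTop (X ω)] with k hk
    exact (min_eq_left hk).symm

theorem iSup_le_add_sum_sub_min {ι : Type*} [Fintype ι] (x : ι → ℝ) {k : ℝ} (hk : 0 ≤ k) :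
    ⨆ j, x j ≤ k + ∑ j, (x j - min (x j) k) := by
  have excess_nonneg : ∀ j ∈ Finset.univ, 0 ≤ x j - min (x j) k :=
    fun j _ => sub_nonneg.2 (min_le_left _ _)
  refine Real.iSup_le (fun j => ?_) (add_nonneg hk (Finset.sum_nonneg excess_nonneg))
  calc x j = min (x j) k + (x j - min (x j) k) := (add_sub_cancel _ _).symm
    _ ≤ k + ∑ j, (x j - min (x j) k) :=
      add_le_add (min_le_right _ _) (Finset.single_le_sum excess_nonneg (Finset.mem_univ j))

theorem tendsto_mul_iSup_zero_of_tendsto_sum_min {ι : Type*} {l : Filter ι} {S : ι → Type*}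
    [∀ i, Fintype (S i)] {c : ι → ℝ} {x : (i : ι) → S i → ℝ} (hX : Integrable X μ)
    (hc_nonneg : ∀ i, 0 ≤ c i) (hc : Tendsto c l (𝓝 0)) (hx_nonneg : ∀ i j, 0 ≤ x i j)
    (hmin : ∀ k : ℝ, 0 ≤ k →
      Tendsto (fun i => c i * ∑ j, min (x i j) k) l (𝓝 (∫ ω, min (X ω) k ∂μ)))
    (hsum : Tendsto (fun i => c i * ∑ j, x i j) l (𝓝 (∫ ω, X ω ∂μ))) :
    Tendsto (fun i => c i * ⨆ j, x i j) l (𝓝 0) := by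
  have nonneg (i) : 0 ≤ c i * ⨆ j, x i j :=
    mul_nonneg (hc_nonneg i) (Real.iSup_nonneg (hx_nonneg i))
  refine tendsto_order.2 ⟨fun a ha => .of_forall fun i => ha.trans_le (nonneg i), fun ε hε => ?_⟩
  obtain ⟨k, hkε, hk⟩ : ∃ k, (∫ ω, X ω ∂μ) - ε < ∫ ω, min (X ω) k ∂μ ∧ 0 ≤ k :=
    (((tendsto_integral_min_atTop hX).eventually_const_lt (sub_lt_self _ hε)).and
      (eventually_ge_atTop 0)).exists
  have excess_tendsto := (hc.mul_const k).add (hsum.sub (hmin k hk))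
  have limit_lt : 0 * k + ((∫ ω, X ω ∂μ) - ∫ ω, min (X ω) k ∂μ) < ε := by linarith
  filter_upwards [excess_tendsto.eventually_lt_const limit_lt] with i hi
  calc c i * ⨆ j, x i j
      ≤ c i * (k + ∑ j, (x i j - min (x i j) k)) :=
        mul_le_mul_of_nonneg_left (iSup_le_add_sum_sub_min _ hk) (hc_nonneg i)
    _ = c i * k + (c i * ∑ j, x i j - c i * ∑ j, min (x i j) k) := by
        rw [Finset.sum_sub_distrib, mul_add, mul_sub]
    _ < ε := hi

end Truncation

theorem stmt_14_general {Ω E : Type*} [MeasurableSpace Ω] [TopologicalSpace E] {P : Measure Ω}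
    {W : Ω → E} {w : (n : ℕ) → Fin n → E} {g : E → ℝ} (hg : Continuous g)
    (hg_nonneg : ∀ x, 0 ≤ g x)
    (hdist : ∀ f : BoundedContinuousFunction E ℝ,
      Tendsto (fun n : ℕ => (n : ℝ)⁻¹ * ∑ j, f (w n j)) atTop (𝓝 (∫ ω, f (W ω) ∂P)))
    (hgW : Integrable (fun ω => g (W ω)) P)
    (hmom : Tendsto (fun n : ℕ => (n : ℝ)⁻¹ * ∑ j, g (w n j)) atTop (𝓝 (∫ ω, g (W ω) ∂P))) :
    Tendsto (fun n : ℕ => (n : ℝ)⁻¹ * ⨆ j, g (w n j)) atTop (𝓝 0) := by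
  refine tendsto_mul_iSup_zero_of_tendsto_sum_min hgW (fun n => by positivity)
    tendsto_inv_atTop_nhds_zero_nat (fun _ _ => hg_nonneg _) (fun k hk => ?_) hmom
  have norm_min_le (x : E) : ‖min (g x) k‖ ≤ k := by
    rw [Real.norm_of_nonneg (le_min (hg_nonneg x) hk)]
    exact min_le_right _ _
  exact hdist (.ofNormedAddCommGroup _ (hg.min continuous_const) k norm_min_le)

/-- Under Assumption 1 (stated for the empirical law of the weights `w⁽ⁿ⁾`),
the maximal squared weight is `o(n)`: `n⁻¹ max_{1 ≤ j ≤ n} (w_j⁽ⁿ⁾)² → 0`. -/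
theorem stmt_14
    {Ω : Type*} [MeasurableSpace Ω] (P : Measure Ω) [IsProbabilityMeasure P]
    (W : Ω → ℝ) (hWmeas : Measurable W)
    (w : (n : ℕ) → Fin n → ℝ) (hwpos : ∀ n j, 0 < w n j)
    -- `Wₙ` (the empirical law of `w⁽ⁿ⁾`) converges in distribution to `W`
    (hdist : ∀ f : BoundedContinuousFunction ℝ ℝ,
      Tendsto (fun (n : ℕ) => (n : ℝ)⁻¹ * ∑ j : Fin n, f (w n j)) atTop
        (𝓝 (∫ ω, f (W ω) ∂P)))
    -- second moments are finite and converge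
    (hW2 : Integrable (fun ω => (W ω) ^ 2) P)
    (hmom : Tendsto (fun (n : ℕ) => (n : ℝ)⁻¹ * ∑ j : Fin n, (w n j) ^ 2) atTop
      (𝓝 (∫ ω, (W ω) ^ 2 ∂P))) :
    Tendsto (fun (n : ℕ) => (n : ℝ)⁻¹ * sSup (Set.range fun j : Fin n => (w n j) ^ 2))
      atTop (𝓝 0) :=
  stmt_14_general (continuous_pow 2) sq_nonneg hdist hW2 hmom
end
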